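/- arXiv:1303.6030 — 3 statements merged into one kernel-verified Lean document; each statement's English description precedes it below -/
import Mathlib

section
/- Suppose char(K) = 0 and S = K[x_1,...,x_n]. Let I ⊆ S and J ⊆ S be homogeneous ideals. Then for a general change of coordinates g ∈ GL_n(K), one has H(I·g(J), d) ≥ H(I^lex · J^oplex, d) for all d ≥ 0. -/
open MvPolynomial TensorProduct CategoryTheory

noncomputable section

/-- The polynomial ring `S = K[x_1,...,x_n]`, standard graded. -/
abbrev PS (K : Type) [Field K] (n : ℕ) : Type := MvPolynomial (Fin n) K

variable (K : Type) [Field K] (n : ℕ)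

/-- An ideal of `S` is homogeneous if it contains all homogeneous components of its
elements. -/
def IsHomog (I : Ideal (PS K n)) : Prop :=
  ∀ f ∈ I, ∀ d : ℕ, MvPolynomial.homogeneousComponent d f ∈ I

/-- The change of coordinates of `S` induced by `g ∈ GL_n(K)`, determined by
`g(x_i) = ∑_j g_{ji} x_j`. -/
def coordChange (g : GL (Fin n) K) : PS K n →ₐ[K] PS K n :=
  MvPolynomial.aeval (fun i => ∑ j, ((g : Matrix (Fin n) (Fin n) K) j i) • MvPolynomial.X j)

/-- A property `P` holds for a general change of coordinates `g ∈ GL_n(K)` if there is a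
nonempty Zariski open subset `U ⊆ GL_n(K)` on which it holds; equivalently (as `GL_n(K)` is
an irreducible variety over the infinite field `K`) there is a nonzero polynomial `F` in the
matrix entries such that `P g` holds whenever `F` does not vanish at `g`. -/
def generally (P : GL (Fin n) K → Prop) : Prop :=
  ∃ F : MvPolynomial (Fin n × Fin n) K, F ≠ 0 ∧
    ∀ g : GL (Fin n) K,
      MvPolynomial.eval (fun p => (g : Matrix (Fin n) (Fin n) K) p.1 p.2) F ≠ 0 → P g

/-- The Hilbert function: `H(I,d) = dim_K I_d`. -/
def hilb (I : Ideal (PS K n)) (d : ℕ) : ℕ :=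
  Module.finrank K ↥(Submodule.restrictScalars K I ⊓ homogeneousSubmodule (Fin n) K d)

/-- `a <_lex b` for the lexicographic order induced by `x_1 > x_2 > ⋯ > x_n`. -/
def lexLt (a b : Fin n →₀ ℕ) : Prop := Finsupp.Lex (· < ·) (· < ·) a b

/-- `a <_oplex b` for the (opposite) lexicographic order induced by `x_n > ⋯ > x_1`. -/
def oplexLt (a b : Fin n →₀ ℕ) : Prop := Finsupp.Lex (· > ·) (· < ·) a b

/-- The total degree of an exponent vector. -/
def expDeg (m : Fin n →₀ ℕ) : ℕ := ∑ i, m i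

/-- A monomial ideal: together with any polynomial it contains each of its monomials. -/
def IsMonomialIdeal (I : Ideal (PS K n)) : Prop :=
  ∀ f ∈ I, ∀ m ∈ f.support, MvPolynomial.monomial m (1 : K) ∈ I

/-- A lex ideal: a monomial ideal whose monomials form a lex set. -/
def IsLexIdeal (I : Ideal (PS K n)) : Prop :=
  IsMonomialIdeal K n I ∧ ∀ u v : Fin n →₀ ℕ, expDeg n u = expDeg n v →
    MvPolynomial.monomial u (1 : K) ∈ I → lexLt n u v →
      MvPolynomial.monomial v (1 : K) ∈ I

/-- An opposite lex ideal: a monomial ideal whose monomials form an opposite lex set. -/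
def IsOplexIdeal (I : Ideal (PS K n)) : Prop :=
  IsMonomialIdeal K n I ∧ ∀ u v : Fin n →₀ ℕ, expDeg n u = expDeg n v →
    MvPolynomial.monomial u (1 : K) ∈ I → oplexLt n u v →
      MvPolynomial.monomial v (1 : K) ∈ I

/-- The initial ideal `in_r(I)` of `I` with respect to a (strict) monomial order `r`:
the ideal generated by the `r`-maximal monomials of the nonzero elements of `I`. -/
def initialIdealO (r : (Fin n →₀ ℕ) → (Fin n →₀ ℕ) → Prop) (I : Ideal (PS K n)) :
    Ideal (PS K n) :=
  Ideal.span {g | ∃ f ∈ I, ∃ m ∈ f.support,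
    (∀ m' ∈ f.support, m' = m ∨ r m' m) ∧ g = MvPolynomial.monomial m (1 : K)}

section Comb
variable {n}

lemma expDeg_add (u v : Fin n →₀ ℕ) : expDeg n (u + v) = expDeg n u + expDeg n v := by
  simp [expDeg, Finset.sum_add_distrib]

lemma expDeg_single (i : Fin n) (k : ℕ) : expDeg n (Finsupp.single i k) = k := by
  simp [expDeg, Finsupp.single_apply]

lemma expDeg_mono {u v : Fin n →₀ ℕ} (h : u ≤ v) : expDeg n u ≤ expDeg n v :=
  Finset.sum_le_sum fun i _ => h i

lemma expDeg_eq_zero {u : Fin n →₀ ℕ} (h : expDeg n u = 0) : u = 0 := by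
  ext i
  have := (Finset.sum_eq_zero_iff.mp h) i (Finset.mem_univ i)
  simpa using this

/-- all exponents of degree `a` -/
def monF (n a : ℕ) : Finset (Fin n →₀ ℕ) := Finset.finsuppAntidiag Finset.univ a

@[simp] lemma mem_monF {a : ℕ} {u : Fin n →₀ ℕ} : u ∈ monF n a ↔ expDeg n u = a := by
  simp [monF, Finset.mem_finsuppAntidiag, expDeg]

/-- the elementary move `x_q ↦ x_p` -/
def mv (u : Fin n →₀ ℕ) (q p : Fin n) : Fin n →₀ ℕ :=
  u - Finsupp.single q 1 + Finsupp.single p 1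

lemma mv_add {u : Fin n →₀ ℕ} {q : Fin n} (p : Fin n) (h : u q ≠ 0) :
    mv u q p + Finsupp.single q 1 = u + Finsupp.single p 1 := by
  ext k
  simp only [mv, Finsupp.add_apply, Finsupp.tsub_apply, Finsupp.single_apply]
  split_ifs <;> subst_vars <;> omega

lemma mv_apply (u : Fin n →₀ ℕ) (q p k : Fin n) :
    mv u q p k = u k - (if q = k then 1 else 0) + (if p = k then 1 else 0) := by
  simp [mv, Finsupp.single_apply]

lemma expDeg_mv {u : Fin n →₀ ℕ} {q : Fin n} (p : Fin n) (h : u q ≠ 0) :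
    expDeg n (mv u q p) = expDeg n u := by
  have := congrArg (expDeg n) (mv_add p h)
  simp only [expDeg_add, expDeg_single] at this
  omega

/-- strongly stable sets -/
def SStab (E : Set (Fin n →₀ ℕ)) : Prop :=
  ∀ u ∈ E, ∀ p q : Fin n, p < q → u q ≠ 0 → mv u q p ∈ E

/-- opposite strongly stable sets -/
def OStab (E : Set (Fin n →₀ ℕ)) : Prop :=
  ∀ u ∈ E, ∀ p q : Fin n, p < q → u p ≠ 0 → mv u p q ∈ E

def Dom (u v : Fin n →₀ ℕ) : Prop := ∀ i j, u i ≠ 0 → v j ≠ 0 → i ≤ j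

lemma exists_gt_of_ne {e u : Fin n →₀ ℕ} (hd : expDeg n e = expDeg n u) (hne : e ≠ u) :
    ∃ j, u j < e j := by
  by_contra hcon
  push Not at hcon
  apply hne
  ext i
  exact (Finset.sum_eq_sum_iff_of_le (fun i _ => hcon i)).mp hd i (Finset.mem_univ i)

lemma comb_push {E F : Set (Fin n →₀ ℕ)} (hE : SStab E) (hF : OStab F)
    {u v : Fin n →₀ ℕ} (huv : Dom u v) :
    ∀ (N : ℕ) (e f : Fin n →₀ ℕ), (∑ i, (e i - u i)) = N → e + f = u + v →
      expDeg n e = expDeg n u → e ∈ E → f ∈ F → u ∈ E ∧ v ∈ F := by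
  intro N
  induction N using Nat.strong_induction_on with
  | _ N ih =>
  intro e f hN hs hd he hf
  by_cases hne : e = u
  · subst hne
    exact ⟨he, by rwa [← add_left_cancel hs]⟩
  · obtain ⟨j, hj⟩ := exists_gt_of_ne hd hne
    obtain ⟨i, hi⟩ := exists_gt_of_ne hd.symm (Ne.symm hne)
    have hsi := DFunLike.congr_fun hs i
    have hsj := DFunLike.congr_fun hs j
    simp only [Finsupp.add_apply] at hsi hsj
    have hij : i ≤ j := huv i j (by omega) (by omega)
    have hij' : i ≠ j := by rintro rfl; omega
    have hlt : i < j := lt_of_le_of_ne hij hij'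
    have hej : e j ≠ 0 := by omega
    have hfi : f i ≠ 0 := by omega
    refine ih (∑ k, (mv e j i k - u k)) ?_ (mv e j i) (mv f i j) rfl ?_ ?_
      (hE e he i j hlt hej) (hF f hf i j hlt hfi)
    · rw [← hN]
      apply Finset.sum_lt_sum
      · intro k _
        rw [mv_apply]
        split_ifs <;> subst_vars <;> omega
      · refine ⟨j, Finset.mem_univ _, ?_⟩
        rw [mv_apply]
        simp [hij']
        omega
    · have h1 := mv_add i hej
      have h2 := mv_add j hfi
      have : mv e j i + mv f i j + (Finsupp.single j 1 + Finsupp.single i 1)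
        = u + v + (Finsupp.single j 1 + Finsupp.single i 1) := by
        rw [← hs]
        calc _ = (mv e j i + Finsupp.single j 1) + (mv f i j + Finsupp.single i 1) := by abel
          _ = _ := by rw [h1, h2]; abel
      exact add_right_cancel this
    · rw [expDeg_mv i hej, hd]

lemma comb_le {u v u' v' : Fin n →₀ ℕ} (h : Dom u v) (h' : Dom u' v') (hs : u + v = u' + v')
    (hd : expDeg n u ≤ expDeg n u') : u ≤ u' := by
  by_contra hcon
  have : ∃ j, u' j < u j := by
    by_contra hc
    push Not at hc
    exact hcon hc
  obtain ⟨j, hj⟩ := this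
  have : ∃ i, u i < u' i := by
    by_contra hc
    push Not at hc
    have : expDeg n u' < expDeg n u :=
      Finset.sum_lt_sum (fun i _ => hc i) ⟨j, Finset.mem_univ _, hj⟩
    omega
  obtain ⟨i, hi⟩ := this
  have hsi := DFunLike.congr_fun hs i
  have hsj := DFunLike.congr_fun hs j
  simp only [Finsupp.add_apply] at hsi hsj
  have h1 := h j i (by omega) (by omega)
  have h2 := h' i j (by omega) (by omega)
  have : i = j := le_antisymm h2 h1
  subst this
  omega

lemma sub_single_add {v : Fin n →₀ ℕ} {j : Fin n} (h : v j ≠ 0) :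
    v - Finsupp.single j 1 + Finsupp.single j 1 = v := by
  ext k
  simp only [Finsupp.add_apply, Finsupp.tsub_apply, Finsupp.single_apply]
  split_ifs <;> subst_vars <;> omega

/-- moving the minimal variable of `v` to `u` -/
lemma Dom.step {u v : Fin n →₀ ℕ} (h : Dom u v) (hv : v ≠ 0) :
    ∃ j, v j ≠ 0 ∧ (∀ k, v k ≠ 0 → j ≤ k) ∧
      Dom (u + Finsupp.single j 1) (v - Finsupp.single j 1) := by
  have hne : v.support.Nonempty := Finsupp.support_nonempty_iff.mpr hv
  refine ⟨v.support.min' hne, ?_, ?_, ?_⟩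
  · exact Finsupp.mem_support_iff.mp (Finset.min'_mem _ hne)
  · intro k hk
    exact Finset.min'_le _ _ (Finsupp.mem_support_iff.mpr hk)
  · intro i k hi hk
    have hk' : v k ≠ 0 := by
      intro h0; apply hk; simp [h0]
    by_cases hij : v.support.min' hne = i
    · rw [← hij]; exact Finset.min'_le _ _ (Finsupp.mem_support_iff.mpr hk')
    · apply h i k _ hk'
      simpa [Finsupp.single_apply, hij] using hi

lemma exists_dom (w : Fin n →₀ ℕ) (a : ℕ) (ha : a ≤ expDeg n w) :
    ∃ u v, u + v = w ∧ Dom u v ∧ expDeg n u = a := by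
  induction a with
  | zero => exact ⟨0, w, by simp, fun i j h => by simp at h, by simp [expDeg]⟩
  | succ a ih =>
    obtain ⟨u, v, hs, hD, hu⟩ := ih (by omega)
    have hv : v ≠ 0 := by
      rintro rfl
      rw [← hs, expDeg_add] at ha
      simp [expDeg] at ha hu
      omega
    obtain ⟨j, hj, -, hD'⟩ := hD.step hv
    refine ⟨_, _, ?_, hD', ?_⟩
    · rw [← hs, add_assoc, add_comm (Finsupp.single j 1), sub_single_add hj]
    · rw [expDeg_add, expDeg_single, hu]

open Classical in
def prodF (n : ℕ) (E F : Set (Fin n →₀ ℕ)) (d : ℕ) : Finset (Fin n →₀ ℕ) :=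
  (monF n d).filter fun w => ∃ e ∈ E, ∃ f ∈ F, e + f = w

open Classical in
def pairF (n : ℕ) (E F : Set (Fin n →₀ ℕ)) (d : ℕ) :
    Finset ((_ : Fin n →₀ ℕ) × (Fin n →₀ ℕ)) :=
  (((Finset.range (d + 1)).biUnion (monF n)).filter
    (fun v => v ∈ F ∧ ∀ v' ∈ F, v' ≤ v → v' = v)).sigma
    fun v => (monF n (d - expDeg n v)).filter fun u => u ∈ E ∧ Dom u v

lemma mem_pairF {E F : Set (Fin n →₀ ℕ)} {d : ℕ} {v u : Fin n →₀ ℕ} :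
    (⟨v, u⟩ : (_ : Fin n →₀ ℕ) × (Fin n →₀ ℕ)) ∈ pairF n E F d ↔
      v ∈ F ∧ (∀ v' ∈ F, v' ≤ v → v' = v) ∧ expDeg n u + expDeg n v = d ∧ u ∈ E ∧ Dom u v := by
  simp only [pairF, Finset.mem_sigma, Finset.mem_filter, Finset.mem_biUnion, Finset.mem_range,
    mem_monF]
  constructor
  · rintro ⟨⟨⟨a, ha, rfl⟩, h1, h2⟩, h3, h4, h5⟩
    exact ⟨h1, h2, by omega, h4, h5⟩
  · rintro ⟨h1, h2, h3, h4, h5⟩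
    exact ⟨⟨⟨_, by omega, rfl⟩, h1, h2⟩, by omega, h4, h5⟩

lemma card_prodF_le_pairF {E F : Set (Fin n →₀ ℕ)} (hE : SStab E) (hEu : IsUpperSet E)
    (hF : OStab F) (hFu : IsUpperSet F) (d : ℕ) :
    (prodF n E F d).card ≤ (pairF n E F d).card := by
  apply Finset.card_le_card_of_surjOn (fun p => p.2 + p.1)
  intro w hw
  simp only [prodF, Finset.coe_filter, mem_monF, Set.mem_ofPred_eq] at hw
  obtain ⟨hd, e, he, f, hf, hs⟩ := hw
  have hex : ∃ N, ∃ u v, u + v = w ∧ Dom u v ∧ u ∈ E ∧ v ∈ F ∧ expDeg n v = N := by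
    obtain ⟨u, v, hs', hD, hu⟩ := exists_dom w (expDeg n e) (by rw [← hs, expDeg_add]; omega)
    obtain ⟨h1, h2⟩ := comb_push hE hF hD _ e f rfl (hs.trans hs'.symm) hu.symm he hf
    exact ⟨_, u, v, hs', hD, h1, h2, rfl⟩
  classical
  obtain ⟨u, v, hs', hD, hu, hv, hN⟩ := Nat.find_spec hex
  have hmin := fun m (hm : m < Nat.find hex) => Nat.find_min hex hm
  refine ⟨⟨v, u⟩, ?_, hs'⟩
  rw [Finset.mem_coe, mem_pairF]
  refine ⟨hv, ?_, by rw [← hd, ← hs', expDeg_add], hu, hD⟩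
  intro v' hv' hle
  by_contra hne
  have hv0 : v ≠ 0 := by
    rintro rfl
    exact hne (le_antisymm hle (by simp))
  obtain ⟨j, hj, hjmin, hD'⟩ := hD.step hv0
  have hk : ∃ k, v' k < v k := by
    by_contra hc
    push Not at hc
    exact hne (le_antisymm hle hc)
  obtain ⟨k, hk⟩ := hk
  have hvk : v k ≠ 0 := by omega
  have h1 : v - Finsupp.single k 1 ∈ F := by
    refine hFu ?_ hv'
    intro i
    have := hle i
    simp only [Finsupp.tsub_apply, Finsupp.single_apply]
    split_ifs <;> subst_vars <;> omega
  have h2 : v - Finsupp.single j 1 ∈ F := by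
    by_cases hjk : j = k
    · rwa [hjk]
    · have hlt : j < k := lt_of_le_of_ne (hjmin k hvk) hjk
      have := hF _ h1 j k hlt (by simp [Finsupp.single_apply, Ne.symm hjk, hj])
      convert this using 1
      ext i
      simp only [mv_apply, Finsupp.tsub_apply, Finsupp.single_apply]
      split_ifs <;> subst_vars <;> first | omega | (exfalso; omega) | simp_all
  refine hmin (expDeg n (v - Finsupp.single j 1)) ?_ ⟨_, _, ?_, hD', hEu (by simp) hu, h2, rfl⟩
  · rw [← hN]
    have := congrArg (expDeg n) (sub_single_add hj)
    rw [expDeg_add, expDeg_single] at this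
    omega
  · rw [← hs', add_assoc, add_comm (Finsupp.single j 1), sub_single_add hj]

lemma card_pairF_le_prodF {E F : Set (Fin n →₀ ℕ)} (d : ℕ) :
    (pairF n E F d).card ≤ (prodF n E F d).card := by
  apply Finset.card_le_card_of_injOn (fun p => p.2 + p.1)
  · rintro ⟨v, u⟩ hp
    rw [Finset.mem_coe, mem_pairF] at hp
    simp only [prodF, Finset.coe_filter, mem_monF, Set.mem_ofPred_eq]
    exact ⟨by rw [expDeg_add]; exact hp.2.2.1, u, hp.2.2.2.1, v, hp.1, rfl⟩
  · rintro ⟨v, u⟩ hp ⟨v', u'⟩ hp' heq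
    rw [Finset.mem_coe, mem_pairF] at hp hp'
    obtain ⟨h1, h2, h3, h4, h5⟩ := hp
    obtain ⟨h1', h2', h3', h4', h5'⟩ := hp'
    simp only at heq
    have key : u = u' ∧ v = v' := by
      rcases le_total (expDeg n u) (expDeg n u') with hle | hle
      · have := comb_le h5 h5' heq hle
        have hv : v' ≤ v := by
          intro i
          have a := this i
          have b := DFunLike.congr_fun heq i
          simp only [Finsupp.add_apply] at b
          omega
        have := h2 _ h1' hv
        subst this
        exact ⟨add_right_cancel heq, rfl⟩
      · have := comb_le h5' h5 heq.symm hle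
        have hv : v ≤ v' := by
          intro i
          have a := this i
          have b := DFunLike.congr_fun heq i
          simp only [Finsupp.add_apply] at b
          omega
        have := h2' _ h1 hv
        subst this
        exact ⟨add_right_cancel heq, rfl⟩
    rw [key.1, key.2]

open Classical in
lemma card_pairF_mono {E E' F : Set (Fin n →₀ ℕ)} (d : ℕ)
    (h : ∀ a ≤ d, ∀ v, ((monF n a).filter fun u => u ∈ E' ∧ Dom u v).card ≤
      ((monF n a).filter fun u => u ∈ E ∧ Dom u v).card) :
    (pairF n E' F d).card ≤ (pairF n E F d).card := by
  rw [pairF, pairF, Finset.card_sigma, Finset.card_sigma]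
  apply Finset.sum_le_sum
  intro v _
  exact h _ (by omega) v

end Comb

section Big
variable {n}

/-- exponents of degree `a` in the first `i` variables -/
def MonB (n i a : ℕ) : Finset (Fin n →₀ ℕ) := (monF n a).filter fun u => ∀ j, i ≤ j.val → u j = 0

lemma mem_Mon {i a : ℕ} {u : Fin n →₀ ℕ} :
    u ∈ MonB n i a ↔ expDeg n u = a ∧ ∀ j, i ≤ j.val → u j = 0 := by
  simp [MonB]

structure LexOn (i a : ℕ) (L : Finset (Fin n →₀ ℕ)) : Prop where
  sub : L ⊆ MonB n i a
  lex : ∀ u ∈ L, ∀ v ∈ MonB n i a, lexLt n u v → v ∈ L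

lemma lexLt_iff {u v : Fin n →₀ ℕ} :
    lexLt n u v ↔ ∃ j, (∀ i < j, u i = v i) ∧ u j < v j := Iff.rfl

lemma lexLt_iff' {u v : Fin n →₀ ℕ} : lexLt n u v ↔ toLex u < toLex v := Iff.rfl

lemma exists_subLex {i a : ℕ} {L : Finset (Fin n →₀ ℕ)} (hL : LexOn i a L) (s : ℕ)
    (hs : s ≤ L.card) : ∃ L' ⊆ L, LexOn i a L' ∧ L'.card = s ∧
      ∀ l ∈ L, l ∉ L' → ∀ u ∈ L', lexLt n l u := by
  induction hk : L.card - s generalizing s with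
  | zero => exact ⟨L, subset_rfl, hL, by omega, fun l h h' => absurd h h'⟩
  | succ k ih =>
    obtain ⟨L', hsub, hL', hc, hlt⟩ := ih (s + 1) (by omega) (by omega)
    have hne : L'.Nonempty := by rw [← Finset.card_pos]; omega
    obtain ⟨m, hm, hmin⟩ := Finset.exists_min_image L' toLex hne
    have hmin' : ∀ u ∈ L'.erase m, lexLt n m u := by
      intro u hu
      rw [Finset.mem_erase] at hu
      rw [lexLt_iff']
      exact lt_of_le_of_ne (hmin u hu.2) (fun h => hu.1 (toLex.injective h).symm)
    refine ⟨L'.erase m, (Finset.erase_subset _ _).trans hsub, ⟨?_, ?_⟩, ?_, ?_⟩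
    · exact (Finset.erase_subset _ _).trans hL'.sub
    · intro u hu v hv huv
      rw [Finset.mem_erase]
      refine ⟨?_, hL'.lex u (Finset.mem_of_mem_erase hu) v hv huv⟩
      rintro rfl
      have h1 := hmin' u hu
      rw [lexLt_iff'] at h1 huv
      exact lt_asymm h1 huv
    · rw [Finset.card_erase_of_mem hm]; omega
    · intro l hl hl' u hu
      by_cases hlm : l = m
      · subst hlm; exact hmin' u hu
      · exact hlt l hl (fun h => hl' (Finset.mem_erase.mpr ⟨hlm, h⟩)) u (Finset.mem_of_mem_erase hu)

def AStmt (i : Fin n) : Prop := ∀ (a : ℕ) (B L : Finset (Fin n →₀ ℕ)),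
  B ⊆ MonB n (i.val + 1) a → SStab (B : Set (Fin n →₀ ℕ)) → LexOn (i.val + 1) a L →
  B.card ≤ L.card → ∑ u ∈ B, u i ≤ ∑ u ∈ L, u i

def BigStmt (i : Fin n) : Prop := ∀ (a : ℕ) (B L : Finset (Fin n →₀ ℕ)),
  B ⊆ MonB n (i.val + 1) a → SStab (B : Set (Fin n →₀ ℕ)) → LexOn (i.val + 1) a L →
  L.card ≤ B.card → (L.filter fun u => u i = 0).card ≤ (B.filter fun u => u i = 0).card

lemma SStab.pow {E : Set (Fin n →₀ ℕ)} (hE : SStab E) {p q : Fin n} (hpq : p < q) :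
    ∀ (k : ℕ) (u : Fin n →₀ ℕ), u ∈ E → k ≤ u q →
      u - Finsupp.single q k + Finsupp.single p k ∈ E := by
  intro k
  induction k with
  | zero => intro u hu _; simpa using hu
  | succ k ih =>
    intro u hu hk
    have := hE _ (ih u hu (by omega)) p q hpq (by
      simp [Finsupp.single_apply, hpq.ne]; omega)
    convert this using 1
    ext i
    simp only [mv_apply, Finsupp.add_apply, Finsupp.tsub_apply, Finsupp.single_apply]
    have := hpq.ne
    split_ifs <;> subst_vars <;> first | omega | simp_all

lemma Mon_mem_filter {i : Fin n} {a : ℕ} {u : Fin n →₀ ℕ} :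
    (u ∈ MonB n (i.val + 1) a ∧ u i = 0) ↔ u ∈ MonB n i.val a := by
  rw [mem_Mon, mem_Mon]
  constructor
  · rintro ⟨⟨h1, h2⟩, h3⟩
    refine ⟨h1, fun j hj => ?_⟩
    rcases hj.eq_or_lt with h | h
    · rw [← Fin.ext h]; exact h3
    · exact h2 j h
  · rintro ⟨h1, h2⟩
    exact ⟨⟨h1, fun j hj => h2 j (by omega)⟩, h2 i le_rfl⟩

lemma Mon_mono {i j a : ℕ} (h : i ≤ j) : MonB n i a ⊆ MonB n j a := by
  intro u hu
  rw [mem_Mon] at hu ⊢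
  exact ⟨hu.1, fun k hk => hu.2 k (by omega)⟩

lemma filter_stab {i : Fin n} {a : ℕ} {B : Finset (Fin n →₀ ℕ)}
    (hB : B ⊆ MonB n (i.val + 1) a) (hS : SStab (B : Set (Fin n →₀ ℕ))) :
    SStab ((B.filter fun u => u i = 0 : Finset (Fin n →₀ ℕ)) : Set (Fin n →₀ ℕ)) := by
  intro u hu p q hpq hq
  rw [Finset.mem_coe, Finset.mem_filter] at hu ⊢
  refine ⟨hS u hu.1 p q hpq hq, ?_⟩
  have hqi : q < i := by
    by_contra hc
    push Not at hc
    have := Mon_mem_filter.mp ⟨hB hu.1, hu.2⟩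
    exact hq ((mem_Mon.mp this).2 q hc)
  rw [mv_apply, if_neg hqi.ne, if_neg (hpq.trans hqi).ne, hu.2]

lemma filter_lex {i : Fin n} {a : ℕ} {L : Finset (Fin n →₀ ℕ)} (hL : LexOn (i.val + 1) a L) :
    LexOn i.val a (L.filter fun u => u i = 0) := by
  constructor
  · intro u hu
    rw [Finset.mem_filter] at hu
    exact Mon_mem_filter.mp ⟨hL.sub hu.1, hu.2⟩
  · intro u hu v hv huv
    rw [Finset.mem_filter] at hu ⊢
    have := Mon_mem_filter.mpr hv
    exact ⟨hL.lex u hu.1 v this.1 huv, this.2⟩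

lemma big_of_A {i j : Fin n} (hij : j.val = i.val + 1) (hA : AStmt i) : BigStmt j := by
  intro a B L hB hS hL hcard
  by_contra hcon
  push Not at hcon
  apply absurd hcard
  push Not
  have hlt : i < j := by rw [Fin.lt_def]; omega
  set B0 := B.filter fun u => u j = 0 with hB0
  have hL0 := filter_lex hL
  rw [hij] at hL0
  obtain ⟨L', hsub, hL', hc, hgt⟩ := exists_subLex hL0 B0.card hcon.le
  have hB0sub : B0 ⊆ MonB n (i.val + 1) a := by
    intro u hu
    rw [hB0, Finset.mem_filter] at hu
    rw [← hij]
    exact Mon_mem_filter.mp ⟨hB hu.1, hu.2⟩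
  have hsum := hA a B0 L' hB0sub (filter_stab hB hS) hL' hc.ge
  have hex : ∃ l ∈ L.filter (fun u => u j = 0), l ∉ L' :=
    Finset.exists_mem_notMem_of_card_lt_card (by rw [hc]; exact hcon)
  obtain ⟨l, hl, hl'⟩ := hex
  -- the map to B0
  have h1 : B.card ≤ ∑ v ∈ B0, (v i + 1) := by
    rw [Finset.card_eq_sum_card_fiberwise (f := fun u =>
      u - Finsupp.single j (u j) + Finsupp.single i (u j)) (t := B0)]
    · apply Finset.sum_le_sum
      intro v _
      have : v i + 1 = (Finset.range (v i + 1)).card := by simp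
      rw [this]
      apply Finset.card_le_card_of_injOn (fun u => u j)
      · intro u hu
        simp only [Finset.coe_filter, Set.mem_ofPred_eq] at hu
        have := DFunLike.congr_fun hu.2 i
        simp [hlt.ne'] at this
        simp; omega
      · intro u hu u' hu' heq
        simp only [Finset.coe_filter, Set.mem_ofPred_eq] at hu hu'
        simp only at heq
        have h := hu.2.trans hu'.2.symm
        rw [heq] at h
        have h := add_right_cancel h
        ext k
        by_cases hk : j = k
        · rw [← hk, heq]
        · have := DFunLike.congr_fun h k
          simpa [Finsupp.single_apply, hk] using this
    · intro u hu
      rw [Finset.mem_coe] at hu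
      simp only [hB0, Finset.coe_filter, Set.mem_ofPred_eq]
      refine ⟨?_, by simp [hlt.ne]⟩
      exact hS.pow hlt _ u hu le_rfl
  have h2 : ∑ v ∈ L', (v i + 1) ≤ (L.erase l).card := by
    have : ∑ v ∈ L', (v i + 1) = (L'.sigma fun v => Finset.range (v i + 1)).card := by
      rw [Finset.card_sigma]; simp
    rw [this]
    apply Finset.card_le_card_of_injOn
      (fun p => p.1 - Finsupp.single i p.2 + Finsupp.single j p.2)
    · rintro ⟨v, k⟩ hp
      simp only [Finset.mem_coe, Finset.mem_sigma, Finset.mem_range] at hp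
      obtain ⟨hv, hk⟩ := hp
      have hvM := mem_Mon.mp (hL'.sub hv)
      have hlM := mem_Mon.mp (hL0.sub hl)
      have hvj : v j = 0 := hvM.2 j hij.ge
      have hlj : l j = 0 := hlM.2 j hij.ge
      simp only [Finset.mem_coe]
      set u := v - Finsupp.single i k + Finsupp.single j k with hu
      have hadd : u + Finsupp.single i k = v + Finsupp.single j k := by
        ext x
        simp only [hu, Finsupp.add_apply, Finsupp.tsub_apply, Finsupp.single_apply]
        split_ifs <;> subst_vars <;> omega
      have hux : ∀ x, x ≠ i → x ≠ j → u x = v x := by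
        intro x hx hx'
        simp [hu, Finsupp.single_apply, hx.symm, hx'.symm]
      have hdu : expDeg n u = a := by
        have := congrArg (expDeg n) hadd
        rw [expDeg_add u, expDeg_add v, expDeg_single, expDeg_single] at this
        have := hvM.1
        omega
      have huM : u ∈ MonB n (j.val + 1) a := by
        rw [mem_Mon]
        refine ⟨hdu, fun x hx => ?_⟩
        have h1 : x ≠ i := by rintro rfl; omega
        have h2 : x ≠ j := by rintro rfl; omega
        rw [hux x h1 h2]
        exact hvM.2 x (by omega)
      have hlu : lexLt n l u := by
        obtain ⟨x, hx1, hx2⟩ := lexLt_iff.mp (hgt l hl hl' v hv)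
        rw [lexLt_iff]
        have hxi : x < i := by
          by_contra hc
          push Not at hc
          have hxi : x = i := by
            by_contra hne
            have h3 : i < x := lt_of_le_of_ne hc (Ne.symm hne)
            have := hvM.2 x h3
            omega
          subst hxi
          have : expDeg n l < expDeg n v := by
            apply Finset.sum_lt_sum
            · intro y _
              rcases lt_trichotomy y x with h | h | h
              · exact (hx1 y h).le
              · rw [h]; exact hx2.le
              · rw [hlM.2 y h]; exact Nat.zero_le _
            · exact ⟨x, Finset.mem_univ _, hx2⟩
          omega
        refine ⟨x, fun y hy => ?_, ?_⟩
        · rw [hux y (hy.trans hxi).ne ((hy.trans hxi).trans hlt).ne]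
          exact hx1 y hy
        · rw [hux x hxi.ne (hxi.trans hlt).ne]
          exact hx2
      rw [Finset.mem_erase]
      refine ⟨?_, hL.lex l (Finset.mem_filter.mp hl).1 u huM hlu⟩
      intro h
      rw [h, lexLt_iff'] at hlu
      exact lt_irrefl _ hlu
    · rintro ⟨v, k⟩ hp ⟨v', k'⟩ hp' heq
      simp only [Finset.mem_coe, Finset.mem_sigma, Finset.mem_range] at hp hp'
      simp only at heq
      have hvj : v j = 0 := (mem_Mon.mp (hL'.sub hp.1)).2 j hij.ge
      have hvj' : v' j = 0 := (mem_Mon.mp (hL'.sub hp'.1)).2 j hij.ge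
      have hk := DFunLike.congr_fun heq j
      simp [hlt.ne, hlt.ne', hvj, hvj'] at hk
      subst hk
      have : v = v' := by
        have h := add_right_cancel heq
        ext x
        have := DFunLike.congr_fun h x
        simp only [Finsupp.tsub_apply, Finsupp.single_apply] at this
        have h1 := hp.2
        have h2 := hp'.2
        split_ifs at this <;> subst_vars <;> omega
      rw [this]
  have h3 : (L.erase l).card < L.card := Finset.card_erase_lt_of_mem (Finset.mem_filter.mp hl).1
  rw [Finset.sum_add_distrib] at h1 h2
  simp only [Finset.sum_const, smul_eq_mul, mul_one] at h1 h2
  omega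

/-- division by a variable -/
def quo (i : Fin n) (B : Finset (Fin n →₀ ℕ)) : Finset (Fin n →₀ ℕ) :=
  (B.filter fun u => ¬ u i = 0).image fun u => u - Finsupp.single i 1

lemma mem_quo {i : Fin n} {B : Finset (Fin n →₀ ℕ)} {u : Fin n →₀ ℕ} :
    u ∈ quo i B ↔ u + Finsupp.single i 1 ∈ B := by
  simp only [quo, Finset.mem_image, Finset.mem_filter]
  constructor
  · rintro ⟨v, ⟨hv, h0⟩, rfl⟩
    rwa [sub_single_add h0]
  · intro h
    exact ⟨_, ⟨h, by simp⟩, by simp⟩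

lemma quo_inj (i : Fin n) (B : Finset (Fin n →₀ ℕ)) :
    Set.InjOn (fun u : Fin n →₀ ℕ => u - Finsupp.single i 1) (B.filter fun u => ¬ u i = 0) := by
  intro u hu v hv h
  simp only [Finset.coe_filter, Set.mem_ofPred_eq] at hu hv
  rw [← sub_single_add hu.2, ← sub_single_add hv.2]
  simp only at h
  rw [h]

lemma sum_quo (i : Fin n) (B : Finset (Fin n →₀ ℕ)) :
    ∑ u ∈ B, u i = ∑ u ∈ quo i B, u i + (quo i B).card := by
  have h1 : ∑ u ∈ B, u i = ∑ u ∈ B.filter (fun u => ¬ u i = 0), u i := by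
    rw [Finset.sum_filter_of_ne]
    intro u _ h; exact h
  rw [h1, quo, Finset.sum_image (quo_inj i B), Finset.card_image_of_injOn (quo_inj i B),
    Finset.card_eq_sum_ones, ← Finset.sum_add_distrib]
  apply Finset.sum_congr rfl
  intro u hu
  simp only [Finset.mem_filter] at hu
  simp; omega

lemma card_quo (i : Fin n) (B : Finset (Fin n →₀ ℕ)) :
    (B.filter fun u => u i = 0).card + (quo i B).card = B.card := by
  rw [quo, Finset.card_image_of_injOn (quo_inj i B)]
  exact Finset.card_filter_add_card_filter_not (fun u : Fin n →₀ ℕ => u i = 0)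

lemma A_of_big {i : Fin n} (hBig : BigStmt i) : AStmt i := by
  intro a
  induction a with
  | zero =>
    intro B L hB _ _ _
    rw [Finset.sum_eq_zero]
    · exact Nat.zero_le _
    · intro u hu
      rw [expDeg_eq_zero (mem_Mon.mp (hB hu)).1]; rfl
  | succ a ih =>
    intro B L hB hS hL hc
    obtain ⟨L', hsub, hL', hc', -⟩ := exists_subLex hL B.card hc
    refine le_trans ?_ (Finset.sum_le_sum_of_subset hsub)
    have hb := hBig _ B L' hB hS hL' hc'.le
    have hq : (quo i B).card ≤ (quo i L').card := by
      have := card_quo i B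
      have := card_quo i L'
      omega
    rw [sum_quo i B, sum_quo i L']
    refine add_le_add (ih _ _ ?_ ?_ ⟨?_, ?_⟩ hq) hq
    · intro u hu
      have := mem_Mon.mp (hB (mem_quo.mp hu))
      rw [expDeg_add, expDeg_single] at this
      rw [mem_Mon]
      exact ⟨by omega, fun j hj => by have := this.2 j hj; simp at this; exact this.1⟩
    · intro u hu p q hpq hq0
      rw [Finset.mem_coe, mem_quo] at hu ⊢
      have := hS _ hu p q hpq (by simp [hq0])
      rw [Finset.mem_coe] at this
      convert this using 1
      ext x
      simp only [mv_apply, Finsupp.add_apply, Finsupp.single_apply]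
      split_ifs <;> subst_vars <;> omega
    · intro u hu
      have := mem_Mon.mp (hL'.sub (mem_quo.mp hu))
      rw [expDeg_add, expDeg_single] at this
      rw [mem_Mon]
      exact ⟨by omega, fun j hj => by have := this.2 j hj; simp at this; exact this.1⟩
    · intro u hu v hv huv
      rw [mem_quo] at hu ⊢
      refine hL'.lex _ hu _ ?_ ?_
      · rw [mem_Mon] at hv ⊢
        refine ⟨by rw [expDeg_add, expDeg_single, hv.1], fun j hj => ?_⟩
        have : i ≠ j := by rintro rfl; omega
        simp [hv.2 j hj, Finsupp.single_apply, this]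
      · obtain ⟨x, h1, h2⟩ := lexLt_iff.mp huv
        exact lexLt_iff.mpr ⟨x, fun y hy => by simp [h1 y hy], by simp [h2]⟩

lemma A_all : ∀ (k : ℕ) (i : Fin n), i.val = k → AStmt i := by
  intro k
  induction k with
  | zero =>
    intro i hi a B L hB _ hL hc
    have hsub : ∀ u ∈ MonB n (i.val + 1) a, u = Finsupp.single i a := by
      intro u hu
      rw [mem_Mon] at hu
      have h0 : ∀ x, x ≠ i → u x = 0 := fun x hx => hu.2 x (by
        have : x.val ≠ i.val := fun h => hx (Fin.ext h)
        omega)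
      have : u i = a := by
        rw [← hu.1, expDeg, Finset.sum_eq_single i (fun x _ hx => h0 x hx) (by simp)]
      ext x
      by_cases hx : x = i
      · subst hx; simp [this]
      · rw [h0 x hx]; simp [Finsupp.single_apply, Ne.symm hx]
    rcases B.eq_empty_or_nonempty with rfl | ⟨b, hb⟩
    · simp
    · apply Finset.sum_le_sum_of_subset
      have hL0 : 0 < L.card := lt_of_lt_of_le (Finset.card_pos.mpr ⟨b, hb⟩) hc
      obtain ⟨l, hl⟩ := Finset.card_pos.mp hL0
      intro u hu
      rw [hsub u (hB hu), ← hsub l (hL.sub hl)]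
      exact hl
  | succ k ih =>
    intro i hi
    have hk : k < n := by have := i.2; omega
    exact A_of_big (big_of_A (i := ⟨k, hk⟩) hi (ih ⟨k, hk⟩ rfl))

lemma big_restrict (a : ℕ) (B L : Finset (Fin n →₀ ℕ)) (hB : B ⊆ MonB n n a)
    (hS : SStab (B : Set (Fin n →₀ ℕ))) (hL : LexOn n a L) (hc : L.card ≤ B.card) :
    ∀ (k i : ℕ), 0 < i → i + k = n → (L.filter fun u => u ∈ MonB n i a).card ≤
      (B.filter fun u => u ∈ MonB n i a).card ∧ LexOn i a (L.filter fun u => u ∈ MonB n i a) ∧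
      SStab ((B.filter fun u => u ∈ MonB n i a : Finset (Fin n →₀ ℕ)) : Set (Fin n →₀ ℕ)) := by
  intro k
  induction k with
  | zero =>
    intro i _ hi
    have hi : i = n := hi
    subst hi
    rw [Finset.filter_true_of_mem (fun u hu => hL.sub hu),
      Finset.filter_true_of_mem (fun u hu => hB hu)]
    exact ⟨hc, hL, hS⟩
  | succ k ih =>
    intro i hi hik
    obtain ⟨h1, h2, h3⟩ := ih (i + 1) (by omega) (by omega)
    have hin : i < n := by omega
    have hA := A_all (i - 1) (⟨i - 1, by omega⟩ : Fin n) rfl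
    have hBig := big_of_A (j := ⟨i, hin⟩) (by simp; omega) hA
    have e : ∀ X : Finset (Fin n →₀ ℕ), X.filter (fun u => u ∈ MonB n i a) =
        (X.filter (fun u => u ∈ MonB n (i + 1) a)).filter (fun u => u (⟨i, hin⟩ : Fin n) = 0) := by
      intro X
      rw [Finset.filter_filter]
      apply Finset.filter_congr
      intro u _
      exact (Mon_mem_filter (i := (⟨i, hin⟩ : Fin n))).symm
    have hB' : B.filter (fun u => u ∈ MonB n (i + 1) a) ⊆ MonB n (i + 1) a := by
      intro u hu; exact (Finset.mem_filter.mp hu).2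
    rw [e, e]
    exact ⟨hBig a _ _ hB' h3 h2 h1, filter_lex (i := (⟨i, hin⟩ : Fin n)) h2,
      filter_stab (i := (⟨i, hin⟩ : Fin n)) hB' h3⟩

open Classical in
/-- Bigatti-type inequality -/
lemma big_dom {E L : Set (Fin n →₀ ℕ)} (hE : SStab E)
    (hL : ∀ u ∈ L, ∀ v, expDeg n u = expDeg n v → lexLt n u v → v ∈ L) (a : ℕ)
    (hc : ((monF n a).filter fun u => u ∈ L).card ≤ ((monF n a).filter fun u => u ∈ E).card)
    (v : Fin n →₀ ℕ) :
    ((monF n a).filter fun u => u ∈ L ∧ Dom u v).card ≤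
      ((monF n a).filter fun u => u ∈ E ∧ Dom u v).card := by
  by_cases hv : v = 0
  · subst hv
    have : ∀ u : Fin n →₀ ℕ, Dom u 0 := fun u i j _ h => absurd rfl h
    simpa [this] using hc
  · obtain ⟨j, hj, hjmin, -⟩ := Dom.step (u := 0) (v := v) (fun i j h => by simp at h) hv
    have hD : ∀ u, expDeg n u = a → (Dom u v ↔ u ∈ MonB n (j.val + 1) a) := by
      intro u hu
      rw [mem_Mon]
      constructor
      · intro h
        refine ⟨hu, fun x hx => ?_⟩
        by_contra h0
        have := h x j h0 hj
        rw [Fin.le_def] at this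
        omega
      · rintro ⟨-, h⟩ x y hx hy
        refine le_trans ?_ (hjmin y hy)
        by_contra hc
        push Not at hc
        exact hx (h x hc)
    have key := big_restrict a ((monF n a).filter fun u => u ∈ E) ((monF n a).filter fun u => u ∈ L)
      ?_ ?_ ⟨?_, ?_⟩ hc (n - (j.val + 1)) (j.val + 1) (by omega) (by have := j.2; omega)
    · have key := key.1
      rw [Finset.filter_filter, Finset.filter_filter] at key
      convert key using 2
      · apply Finset.filter_congr
        intro u hu
        rw [hD u (mem_monF.mp hu)]
      · apply Finset.filter_congr
        intro u hu
        rw [hD u (mem_monF.mp hu)]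
    · intro u hu
      rw [Finset.mem_filter, mem_monF] at hu
      exact mem_Mon.mpr ⟨hu.1, fun j hj => absurd j.2 (by omega)⟩
    · intro u hu p q hpq hq
      rw [Finset.mem_coe, Finset.mem_filter, mem_monF] at hu ⊢
      exact ⟨by rw [expDeg_mv p hq, hu.1], hE u hu.2 p q hpq hq⟩
    · intro u hu
      rw [Finset.mem_filter, mem_monF] at hu
      exact mem_Mon.mpr ⟨hu.1, fun j hj => absurd j.2 (by omega)⟩
    · intro u hu w hw huw
      rw [Finset.mem_filter, mem_monF] at hu ⊢
      have := (mem_Mon.mp hw).1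
      exact ⟨this, hL u hu.2 w (by omega) huw⟩

open Classical in
/-- one-sided comparison -/
lemma prodF_lex_le {E L F : Set (Fin n →₀ ℕ)} (hE : SStab E)
    (hL : ∀ u ∈ L, ∀ v, expDeg n u = expDeg n v → lexLt n u v → v ∈ L)
    (hLs : SStab L) (hLu : IsUpperSet L) (hF : OStab F) (hFu : IsUpperSet F) (d : ℕ)
    (hc : ∀ a ≤ d, ((monF n a).filter fun u => u ∈ L).card ≤
      ((monF n a).filter fun u => u ∈ E).card) :
    (prodF n L F d).card ≤ (prodF n E F d).card :=
  (card_prodF_le_pairF hLs hLu hF hFu d).trans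
    ((card_pairF_mono d fun a ha v => big_dom hE hL a (hc a ha) v).trans (card_pairF_le_prodF d))

lemma lex_sstab {L : Set (Fin n →₀ ℕ)}
    (hL : ∀ u ∈ L, ∀ v, expDeg n u = expDeg n v → lexLt n u v → v ∈ L) : SStab L := by
  intro u hu p q hpq hq
  refine hL u hu _ (expDeg_mv p hq).symm (lexLt_iff.mpr ⟨p, fun x hx => ?_, ?_⟩)
  · rw [mv_apply, if_neg (hx.trans hpq).ne', if_neg hx.ne']; simp
  · rw [mv_apply, if_neg hpq.ne', if_pos rfl]; omega

/-- reversal of the variables -/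
def rv (u : Fin n →₀ ℕ) : Fin n →₀ ℕ := Finsupp.equivMapDomain Fin.revPerm u

lemma rv_apply (u : Fin n →₀ ℕ) (i : Fin n) : rv u i = u (Fin.rev i) := by
  simp [rv, Finsupp.equivMapDomain_apply]

lemma rv_rv (u : Fin n →₀ ℕ) : rv (rv u) = u := by
  ext i; simp [rv_apply]

lemma rv_add (u v : Fin n →₀ ℕ) : rv (u + v) = rv u + rv v := by
  ext i; simp [rv_apply]

lemma expDeg_rv (u : Fin n →₀ ℕ) : expDeg n (rv u) = expDeg n u := by
  simp only [expDeg, rv_apply]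
  exact Equiv.sum_comp Fin.revPerm (fun i => u i)

def rvS (E : Set (Fin n →₀ ℕ)) : Set (Fin n →₀ ℕ) := {u | rv u ∈ E}

lemma rvS_rvS (E : Set (Fin n →₀ ℕ)) : rvS (rvS E) = E := by
  ext u; simp [rvS, rv_rv]

lemma rv_mv (u : Fin n →₀ ℕ) (p q : Fin n) : rv (mv u p q) = mv (rv u) p.rev q.rev := by
  ext k
  simp only [rv_apply, mv_apply]
  simp only [← Fin.rev_eq_iff]

lemma SStab.rvS {E : Set (Fin n →₀ ℕ)} (h : SStab E) : OStab (rvS E) := by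
  intro u hu p q hpq hp
  show rv _ ∈ E
  rw [rv_mv]
  exact h _ hu _ _ (Fin.rev_lt_rev.mpr hpq) (by rw [rv_apply, Fin.rev_rev]; exact hp)

lemma upper_rvS {E : Set (Fin n →₀ ℕ)} (h : IsUpperSet E) : IsUpperSet (rvS E) := by
  intro u v huv hu
  refine h ?_ hu
  intro i
  rw [rv_apply, rv_apply]
  exact huv _

lemma prodF_rv (E F : Set (Fin n →₀ ℕ)) (d : ℕ) :
    (prodF n E F d).card ≤ (prodF n (rvS F) (rvS E) d).card := by
  apply Finset.card_le_card_of_injOn rv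
  · intro w hw
    simp only [prodF, Finset.coe_filter, mem_monF, Set.mem_ofPred_eq] at hw ⊢
    obtain ⟨h, e, he, f, hf, rfl⟩ := hw
    refine ⟨by rw [expDeg_rv, h], rv f, by simpa [rvS, rv_rv] using hf, rv e,
      by simpa [rvS, rv_rv] using he, ?_⟩
    rw [rv_add, add_comm]
  · intro u _ v _ h
    rw [← rv_rv u, h, rv_rv]

open Classical in
/-- full comparison -/
lemma prodF_lex_lex_le {E L F M : Set (Fin n →₀ ℕ)} (hE : SStab E) (hEu : IsUpperSet E)
    (hL : ∀ u ∈ L, ∀ v, expDeg n u = expDeg n v → lexLt n u v → v ∈ L) (hLu : IsUpperSet L)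
    (hF : SStab F) (hFu : IsUpperSet F)
    (hM : ∀ u ∈ M, ∀ v, expDeg n u = expDeg n v → lexLt n u v → v ∈ M) (hMu : IsUpperSet M)
    (d : ℕ)
    (hc : ∀ a ≤ d, ((monF n a).filter fun u => u ∈ L).card ≤
      ((monF n a).filter fun u => u ∈ E).card)
    (hc' : ∀ a ≤ d, ((monF n a).filter fun u => u ∈ M).card ≤
      ((monF n a).filter fun u => u ∈ F).card) :
    (prodF n L (rvS M) d).card ≤ (prodF n E (rvS F) d).card := by
  calc (prodF n L (rvS M) d).card
      ≤ (prodF n E (rvS M) d).card :=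
        prodF_lex_le hE hL (lex_sstab hL) hLu (lex_sstab hM).rvS (upper_rvS hMu) d hc
    _ ≤ (prodF n M (rvS E) d).card := by
        have := prodF_rv E (rvS M) d
        rwa [rvS_rvS] at this
    _ ≤ (prodF n F (rvS E) d).card :=
        prodF_lex_le hF hM (lex_sstab hM) hMu hE.rvS (upper_rvS hEu) d hc'
    _ ≤ (prodF n E (rvS F) d).card := by
        have := prodF_rv F (rvS E) d
        rwa [rvS_rvS] at this

end Big

section Lin
variable {K n}

lemma homog_iff {R : Type*} [CommSemiring R] {a : ℕ} {f : MvPolynomial (Fin n) R} :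
    f.IsHomogeneous a ↔ ∀ m ∈ f.support, expDeg n m = a := by
  have h : ∀ m : Fin n →₀ ℕ, Finsupp.weight (1 : Fin n → ℕ) m = expDeg n m := by
    intro m
    simp [Finsupp.weight_apply, expDeg, Finsupp.sum_fintype]
  constructor
  · intro hf m hm
    rw [← h]
    exact hf (mem_support_iff.mp hm)
  · intro hf m hm
    rw [h]
    exact hf m (mem_support_iff.mpr hm)

lemma coordChange_X (g : GL (Fin n) K) (i : Fin n) :
    coordChange K n g (X i) = ∑ j, ((g : Matrix (Fin n) (Fin n) K) j i) • X j := by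
  simp [coordChange]

lemma coordChange_mul (g h : GL (Fin n) K) (f : PS K n) :
    coordChange K n (g * h) f = coordChange K n g (coordChange K n h f) := by
  have : coordChange K n (g * h) = (coordChange K n g).comp (coordChange K n h) := by
    apply MvPolynomial.algHom_ext
    intro i
    rw [AlgHom.comp_apply, coordChange_X, coordChange_X, map_sum]
    simp only [map_smul, coordChange_X, Finset.smul_sum, smul_smul]
    rw [Finset.sum_comm]
    apply Finset.sum_congr rfl
    intro j _
    rw [← Finset.sum_smul]
    congr 1
    simp [Matrix.mul_apply, mul_comm]
  rw [this]; rfl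

lemma coordChange_one (f : PS K n) : coordChange K n 1 f = f := by
  have : coordChange K n 1 = AlgHom.id K _ := by
    apply MvPolynomial.algHom_ext
    intro i
    rw [coordChange_X]
    simp [Matrix.one_apply]
  rw [this]; rfl

lemma coordChange_inv_left (g : GL (Fin n) K) (f : PS K n) :
    coordChange K n g⁻¹ (coordChange K n g f) = f := by
  rw [← coordChange_mul, inv_mul_cancel, coordChange_one]

lemma coordChange_inj (g : GL (Fin n) K) : Function.Injective (coordChange K n g) :=
  Function.LeftInverse.injective (coordChange_inv_left g)

lemma coordChange_homog (g : GL (Fin n) K) {a : ℕ} {f : PS K n} (hf : f.IsHomogeneous a) :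
    (coordChange K n g f).IsHomogeneous a := by
  have := hf.aeval (n := 1) (fun i => ∑ j, ((g : Matrix (Fin n) (Fin n) K) j i) • (X j : PS K n)) (by
    intro i
    apply IsHomogeneous.sum
    intro j _
    exact (homogeneousSubmodule (Fin n) K 1).smul_mem _ (isHomogeneous_X K j))
  rw [one_mul] at this
  exact this

/-- existence of a nonvanishing minor -/
lemma exists_minor {r : ℕ} {v : Fin r → PS K n} (hv : LinearIndependent K v) :
    ∃ σ : Fin r → (Fin n →₀ ℕ), (Matrix.of fun k l => coeff (σ l) (v k)).det ≠ 0 := by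
  set c : (Fin n →₀ ℕ) → (Fin r → K) := fun m k => coeff m (v k) with hc
  have htop : Submodule.span K (Set.range c) = ⊤ := by
    by_contra hne
    obtain ⟨φ, hφ, hle⟩ := Submodule.exists_le_ker_of_lt_top _ (lt_top_iff_ne_top.mpr hne)
    apply hφ
    have h0 : ∀ m, ∑ k, φ (Pi.single k 1) * coeff m (v k) = 0 := by
      intro m
      have h1 : φ (c m) = 0 := hle (Submodule.subset_span ⟨m, rfl⟩)
      rw [LinearMap.pi_apply_eq_sum_univ φ (c m)] at h1
      rw [← h1]
      apply Finset.sum_congr rfl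
      intro k _
      have hs : (fun j => if k = j then (1 : K) else 0) = Pi.single k 1 := by
        funext j; simp [Pi.single_apply, eq_comm]
      rw [hs, smul_eq_mul, mul_comm]
    have h2 : ∑ k, φ (Pi.single k 1) • v k = 0 := by
      ext m
      simpa [coeff_sum, coeff_smul] using h0 m
    have h3 := Fintype.linearIndependent_iff.mp hv _ h2
    apply LinearMap.pi_ext'
    intro k
    ext
    simpa using h3 k
  obtain ⟨f, hf1, hf2, hf3⟩ := Submodule.exists_fun_fin_finrank_span_eq K (Set.range c)
  have hrk : Module.finrank K (Submodule.span K (Set.range c)) = r := by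
    rw [htop, finrank_top, Module.finrank_fin_fun]
  choose σ hσ using hf1
  refine ⟨fun l => σ (Fin.cast hrk.symm l), ?_⟩
  have hli : LinearIndependent K (fun l => f (Fin.cast hrk.symm l)) :=
    hf3.comp _ (Fin.cast_injective _)
  have hu := (Matrix.linearIndependent_rows_iff_isUnit
    (A := Matrix.of fun l => f (Fin.cast hrk.symm l))).mp hli
  rw [Matrix.isUnit_iff_isUnit_det, isUnit_iff_ne_zero, ← Matrix.det_transpose] at hu
  convert hu using 2
  ext k l
  simp [← hσ, hc]

lemma indep_of_minor {B : Type*} [CommRing B] [IsDomain B] {r : ℕ}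
    {v : Fin r → MvPolynomial (Fin n) B} (σ : Fin r → (Fin n →₀ ℕ))
    (h : (Matrix.of fun k l => coeff (σ l) (v k)).det ≠ 0) : LinearIndependent B v := by
  rw [Fintype.linearIndependent_iff]
  intro c hc
  have h1 : Matrix.vecMul c (Matrix.of fun k l => coeff (σ l) (v k)) = 0 := by
    ext l
    have := congrArg (coeff (σ l)) hc
    simpa [coeff_sum, coeff_smul, Matrix.vecMul, dotProduct] using this
  have := Matrix.eq_zero_of_vecMul_eq_zero h h1
  intro k; rw [this]; rfl

/-- leading exponents -/
def LdE {R Γ : Type*} [CommRing R] [LinearOrder Γ] (w : (Fin n →₀ ℕ) → Γ)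
    (N : Set (MvPolynomial (Fin n) R)) : Set (Fin n →₀ ℕ) :=
  {m | ∃ f ∈ N, coeff m f ≠ 0 ∧ ∀ m' ∈ f.support, m' = m ∨ w m' < w m}

open Classical in
lemma card_le_LdE {R Γ : Type*} [CommRing R] [IsDomain R] [LinearOrder Γ]
    (w : (Fin n →₀ ℕ) → Γ) (a : ℕ) (hw : Set.InjOn w (monF n a))
    (N : Submodule R (MvPolynomial (Fin n) R)) (hN : ∀ f ∈ N, f.IsHomogeneous a)
    (Q : (Fin n →₀ ℕ) → Prop) (hQ : ∀ m m', Q m → w m < w m' → Q m')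
    {ι : Type*} [Fintype ι] (p : ι → MvPolynomial (Fin n) R) (hp : ∀ k, p k ∈ N)
    (h : ∀ c : ι → R, c ≠ 0 → ∃ m, coeff m (∑ k, c k • p k) ≠ 0 ∧ Q m) :
    Fintype.card ι ≤ ((monF n a).filter fun m => m ∈ LdE w (N : Set (MvPolynomial (Fin n) R)) ∧ Q m).card := by
  set T := (monF n a).filter fun m => m ∈ LdE w (N : Set (MvPolynomial (Fin n) R)) ∧ Q m with hT
  let φ : (ι → R) →ₗ[R] (T → R) :=
    { toFun := fun c t => coeff t.1 (∑ k, c k • p k)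
      map_add' := by
        intro c c'; ext t; simp [add_mul, Finset.sum_add_distrib, coeff_sum]
      map_smul' := by
        intro c c'; ext t; simp [mul_assoc, Finset.mul_sum, coeff_sum] }
  have hinj : Function.Injective φ := by
    rw [← LinearMap.ker_eq_bot, LinearMap.ker_eq_bot']
    intro c hc
    by_contra hne
    obtain ⟨m, hm, hQm⟩ := h c hne
    set f := ∑ k, c k • p k with hf
    have hfN : f ∈ N := Submodule.sum_mem _ fun k _ => N.smul_mem _ (hp k)
    have hdeg := homog_iff.mp (hN f hfN)
    obtain ⟨m0, hm0, hmax⟩ := Finset.exists_max_image f.support w ⟨m, mem_support_iff.mpr hm⟩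
    have hm0T : m0 ∈ T := by
      rw [hT, Finset.mem_filter, mem_monF]
      refine ⟨hdeg m0 hm0, ⟨f, hfN, mem_support_iff.mp hm0, fun m' hm' => ?_⟩, ?_⟩
      · rcases (hmax m' hm').eq_or_lt with h | h
        · exact Or.inl (hw (by simpa using hdeg m' hm') (by simpa using hdeg m0 hm0) h)
        · exact Or.inr h
      · have hms := mem_support_iff.mpr hm
        rcases (hmax m hms).eq_or_lt with h | h
        · rw [← hw (by simpa using hdeg m hms) (by simpa using hdeg m0 hm0) h]
          exact hQm
        · exact hQ m m0 hQm h
    exact mem_support_iff.mp hm0 (congrFun hc ⟨m0, hm0T⟩)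
  have := card_le_of_injective R φ hinj
  simpa using this

open Classical in
lemma lead_indep {Γ : Type*} [LinearOrder Γ] (w : (Fin n →₀ ℕ) → Γ)
    (T : Finset (Fin n →₀ ℕ)) (f : (Fin n →₀ ℕ) → PS K n)
    (hf : ∀ m ∈ T, coeff m (f m) ≠ 0 ∧ ∀ m' ∈ (f m).support, m' = m ∨ w m' < w m) :
    LinearIndependent K (fun m : T => f m) := by
  rw [Fintype.linearIndependent_iff]
  intro c hc
  by_contra hne
  push Not at hne
  obtain ⟨k0, hk0⟩ := hne
  obtain ⟨k, hk, hmax⟩ := Finset.exists_max_image (Finset.univ.filter fun k : T => c k ≠ 0)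
    (fun k => w k.1) ⟨k0, by simp [hk0]⟩
  simp only [Finset.mem_filter, Finset.mem_univ, true_and] at hk hmax
  have h := congrArg (coeff k.1) hc
  rw [coeff_sum, Finset.sum_eq_single k] at h
  · simp [coeff_smul, hk, (hf k.1 k.2).1] at h
  · intro b _ hb
    rw [coeff_smul, smul_eq_mul, mul_eq_zero]
    by_contra hcon
    push Not at hcon
    rcases (hf b.1 b.2).2 k.1 (mem_support_iff.mpr hcon.2) with h1 | h1
    · exact hb (Subtype.ext h1.symm)
    · exact absurd (hmax b hcon.1) (not_le.mpr h1)
  · simp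

instance homFin (a : ℕ) : Module.Finite K (homogeneousSubmodule (Fin n) K a) := by
  have : homogeneousSubmodule (Fin n) K a ≤
      Submodule.span K ((fun m => monomial m (1 : K)) '' (monF n a : Set (Fin n →₀ ℕ))) := by
    intro f hf
    rw [f.as_sum]
    apply Submodule.sum_mem
    intro m hm
    have : monomial m (coeff m f) = coeff m f • monomial m (1 : K) := by
      simp [smul_monomial]
    rw [this]
    apply Submodule.smul_mem
    apply Submodule.subset_span
    exact ⟨m, by simpa using homog_iff.mp hf m hm, rfl⟩
  have hfin : Module.Finite K (Submodule.span K ((fun m => monomial m (1 : K)) '' (monF n a : Set (Fin n →₀ ℕ)))) :=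
    FiniteDimensional.span_of_finite K ((Finset.finite_toSet _).image _)
  exact Submodule.finiteDimensional_of_le this

open Classical in
lemma card_LdE_eq {Γ : Type*} [LinearOrder Γ] (w : (Fin n →₀ ℕ) → Γ) (a : ℕ)
    (hw : Set.InjOn w (monF n a)) (N : Submodule K (PS K n))
    (hN : N ≤ homogeneousSubmodule (Fin n) K a) :
    ((monF n a).filter fun m => m ∈ LdE w (N : Set (PS K n))).card = Module.finrank K N := by
  have hfin : Module.Finite K N := Submodule.finiteDimensional_of_le hN
  apply le_antisymm
  · set T := (monF n a).filter fun m => m ∈ LdE w (N : Set (PS K n)) with hT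
    have hex : ∀ m, ∃ f : PS K n, m ∈ T → f ∈ N ∧ coeff m f ≠ 0 ∧
        ∀ m' ∈ f.support, m' = m ∨ w m' < w m := by
      intro m
      by_cases hm : m ∈ T
      · obtain ⟨f, h1, h2, h3⟩ := (Finset.mem_filter.mp hm).2
        exact ⟨f, fun _ => ⟨h1, h2, h3⟩⟩
      · exact ⟨0, fun h => absurd h hm⟩
    choose f hf using hex
    have hli := lead_indep (K := K) w T f (fun m hm => (hf m hm).2)
    have hli' : LinearIndependent K (fun m : T => (⟨f m, (hf m m.2).1⟩ : N)) :=
      LinearIndependent.of_comp N.subtype hli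
    simpa using hli'.fintype_card_le_finrank
  · let b := Module.finBasis K N
    have := card_le_LdE w a hw N (fun f hf => hN hf) (fun _ => True) (fun _ _ _ _ => trivial)
      (fun k => (b k : PS K n)) (fun k => (b k).2) (by
        intro c hc
        have hb : LinearIndependent K (fun k => (b k : PS K n)) :=
          b.linearIndependent.map' N.subtype (by simp)
        have hne : ∑ k, c k • (b k : PS K n) ≠ 0 := by
          intro h0
          apply hc
          funext k
          exact Fintype.linearIndependent_iff.mp hb c h0 k
        obtain ⟨m, hm⟩ := MvPolynomial.ne_zero_iff.mp hne
        exact ⟨m, hm, trivial⟩)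
    simpa using this

end Lin
section Deg
variable {K n}

def Ach (d r : ℕ) (V U : ℕ → Set (PS K n)) : Prop :=
  ∃ g : GL (Fin n) K, ∃ p q : Fin r → PS K n,
    (∀ k, ∃ a b, a + b = d ∧ p k ∈ V a ∧ q k ∈ U b) ∧
    LinearIndependent K (fun k => p k * coordChange K n g (q k))

def monS (K : Type) [Field K] {n : ℕ} (E : Set (Fin n →₀ ℕ)) (a : ℕ) : Set (PS K n) :=
  {f | ∃ m ∈ E, expDeg n m = a ∧ f = monomial m 1}

def wt (W : Fin n → ℕ) (m : Fin n →₀ ℕ) : ℕ := ∑ i, W i * m i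

lemma wt_add (W : Fin n → ℕ) (u v : Fin n →₀ ℕ) : wt W (u + v) = wt W u + wt W v := by
  simp [wt, mul_add, Finset.sum_add_distrib]

lemma wt_single (W : Fin n → ℕ) (i : Fin n) (k : ℕ) : wt W (Finsupp.single i k) = W i * k := by
  simp [wt, Finsupp.single_apply]

def lexW (n d : ℕ) (i : Fin n) : ℕ := (d + 1) ^ (i.rev.val)

lemma lexW_lt {d : ℕ} (hd : 0 < d) {p q : Fin n} (h : p < q) : lexW n d q < lexW n d p := by
  apply Nat.pow_lt_pow_right (by omega)
  exact Fin.rev_lt_rev.mpr h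

lemma le_expDeg (m : Fin n →₀ ℕ) (i : Fin n) : m i ≤ expDeg n m :=
  Finset.single_le_sum (f := fun i => m i) (fun _ _ => Nat.zero_le _) (Finset.mem_univ i)

lemma wt_injOn {d a : ℕ} (ha : a ≤ d) : Set.InjOn (wt (lexW n d)) (monF n a) := by
  intro u hu v hv h
  have hu' : expDeg n u = a := by simpa using hu
  have hv' : expDeg n v = a := by simpa using hv
  have key : ∀ m : Fin n →₀ ℕ, (hm : expDeg n m = a) →
      wt (lexW n d) m = (finFunctionFinEquiv (m := d + 1) (n := n)
        (fun i => ⟨m i.rev, by have := le_expDeg m i.rev; omega⟩) : ℕ) := by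
    intro m hm
    rw [finFunctionFinEquiv_apply, wt]
    rw [← Equiv.sum_comp Fin.revPerm]
    apply Finset.sum_congr rfl
    intro i _
    simp [lexW, mul_comm]
  rw [key u hu', key v hv'] at h
  have := finFunctionFinEquiv.injective (Fin.ext h)
  ext i
  have := congrFun this i.rev
  simpa using this

def diagG (W : Fin n → ℕ) (t : K) (ht : t ≠ 0) : GL (Fin n) K :=
  Matrix.GeneralLinearGroup.mkOfDetNeZero (Matrix.diagonal fun i => t ^ W i) (by
    rw [Matrix.det_diagonal]
    exact Finset.prod_ne_zero_iff.mpr fun i _ => pow_ne_zero _ ht)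

lemma coordChange_diag (W : Fin n → ℕ) (t : K) (ht : t ≠ 0) (m : Fin n →₀ ℕ) (c : K) :
    coordChange K n (diagG W t ht) (monomial m c) = t ^ (wt W m) • monomial m c := by
  have hX : ∀ i, coordChange K n (diagG W t ht) (X i) = t ^ W i • X i := by
    intro i
    rw [coordChange_X, Finset.sum_eq_single i]
    · simp [diagG, Matrix.GeneralLinearGroup.mkOfDetNeZero]
    · intro j _ hj
      simp [diagG, Matrix.GeneralLinearGroup.mkOfDetNeZero, Matrix.diagonal_apply_ne _ hj]
    · simp
  rw [monomial_eq, map_mul, Finsupp.prod_fintype _ _ (by simp), map_prod]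
  simp only [map_pow, hX, smul_pow]
  rw [Finset.prod_smul, algHom_C, mul_smul_comm]
  congr 1
  rw [wt, ← Finset.prod_pow_eq_pow_sum]
  simp [pow_mul]

lemma indep_smul {r : ℕ} {v : Fin r → PS K n} (hv : LinearIndependent K v) (c : Fin r → K)
    (hc : ∀ k, c k ≠ 0) : LinearIndependent K (fun k => c k • v k) :=
  hv.units_smul (fun k => Units.mk0 (c k) (hc k))

lemma indep_of_smul {r : ℕ} {v : Fin r → PS K n} (c : Fin r → K)
    (hc : ∀ k, c k ≠ 0) (hv : LinearIndependent K (fun k => c k • v k)) :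
    LinearIndependent K v := by
  have := indep_smul hv (fun k => (c k)⁻¹) (fun k => inv_ne_zero (hc k))
  simpa [smul_smul, hc] using this

lemma indep_coord {r : ℕ} {v : Fin r → PS K n} (g : GL (Fin n) K) (hv : LinearIndependent K v) :
    LinearIndependent K (fun k => coordChange K n g (v k)) :=
  hv.map' (coordChange K n g).toLinearMap (LinearMap.ker_eq_bot.mpr (coordChange_inj g))

/-- the one-parameter family -/
def defo (W : Fin n → ℕ) (m0 : Fin n →₀ ℕ) (f : PS K n) : MvPolynomial (Fin n) (Polynomial K) :=
  ∑ m ∈ f.support, monomial m (Polynomial.C (coeff m f) * Polynomial.X ^ (wt W m0 - wt W m))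

lemma defo_eval (W : Fin n → ℕ) (m0 : Fin n →₀ ℕ) (f : PS K n)
    (h : ∀ m ∈ f.support, wt W m ≤ wt W m0) (t : K) (ht : t ≠ 0) :
    MvPolynomial.map (Polynomial.evalRingHom t) (defo W m0 f) =
      t ^ (wt W m0) • coordChange K n (diagG W t⁻¹ (inv_ne_zero ht)) f := by
  conv_rhs => rw [f.as_sum]
  rw [defo, map_sum, map_sum, Finset.smul_sum]
  apply Finset.sum_congr rfl
  intro m hm
  rw [map_monomial, coordChange_diag, smul_smul, smul_monomial]
  congr 1
  have := h m hm
  simp only [Polynomial.coe_evalRingHom, Polynomial.eval_mul, Polynomial.eval_C,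
    Polynomial.eval_pow, Polynomial.eval_X, smul_eq_mul]
  rw [pow_sub₀ _ ht this, inv_pow]
  ring

lemma defo_zero (W : Fin n → ℕ) (m0 : Fin n →₀ ℕ) (f : PS K n) (h0 : coeff m0 f ≠ 0)
    (h : ∀ m ∈ f.support, m = m0 ∨ wt W m < wt W m0) :
    MvPolynomial.map (Polynomial.evalRingHom (0 : K)) (defo W m0 f) =
      coeff m0 f • monomial m0 1 := by
  rw [defo, map_sum, Finset.sum_eq_single m0]
  · simp [map_monomial, smul_monomial]
  · intro m hm hne
    have := (h m hm).resolve_left hne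
    have h' : wt W m0 - wt W m ≠ 0 := by omega
    simp [map_monomial, h']
  · intro hc
    exact absurd (mem_support_iff.mpr h0) hc

lemma map_det {A : Type*} [CommRing A] (ε : A →+* K) {r : ℕ}
    (v : Fin r → MvPolynomial (Fin n) A) (σ : Fin r → (Fin n →₀ ℕ)) :
    ε (Matrix.of fun k l => coeff (σ l) (v k)).det =
      (Matrix.of fun k l => coeff (σ l) (MvPolynomial.map ε (v k))).det := by
  rw [RingHom.map_det]
  congr 1

lemma map_C_eval (t : K) (f : PS K n) :
    MvPolynomial.map (Polynomial.evalRingHom t) (MvPolynomial.map Polynomial.C f) = f := by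
  rw [MvPolynomial.map_map]
  have : (Polynomial.evalRingHom t).comp Polynomial.C = RingHom.id K := by ext; simp
  rw [this, MvPolynomial.map_id]

lemma ach_degen [CharZero K] {d r : ℕ} (V U : ℕ → Set (PS K n)) (W : Fin n → ℕ)
    (E : Set (Fin n →₀ ℕ)) (hE : ∀ m ∈ E, m ∈ LdE (wt W) (V (expDeg n m)))
    (h : Ach d r (monS K E) U) : Ach d r V U := by
  obtain ⟨g, p, q, hpq, hli⟩ := h
  choose a b hab hp hq using hpq
  choose m hmE hma hpm using hp
  choose f hfV hf0 hfl using fun k => hE (m k) (hmE k)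
  let P : Fin r → MvPolynomial (Fin n) (Polynomial K) := fun k =>
    defo W (m k) (f k) * MvPolynomial.map Polynomial.C (coordChange K n g (q k))
  have h0 : LinearIndependent K (fun k => MvPolynomial.map (Polynomial.evalRingHom (0 : K)) (P k)) := by
    have := indep_smul hli (fun k => coeff (m k) (f k)) hf0
    convert this using 2 with k
    simp only [P]
    rw [map_mul, map_C_eval, defo_zero W (m k) (f k) (hf0 k) (hfl k), hpm k, smul_mul_assoc]
  obtain ⟨σ, hσ⟩ := exists_minor h0
  rw [← map_det] at hσ
  set δ := (Matrix.of fun k l => coeff (σ l) (P k)).det with hδ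
  have hδ0 : δ * Polynomial.X ≠ 0 := by
    apply mul_ne_zero _ Polynomial.X_ne_zero
    rintro h
    rw [h] at hσ
    simp at hσ
  obtain ⟨t, ht⟩ : ∃ t : K, (δ * Polynomial.X).eval t ≠ 0 := by
    by_contra hc
    push Not at hc
    exact hδ0 (Polynomial.funext (by simpa using hc))
  rw [Polynomial.eval_mul, Polynomial.eval_X] at ht
  have ht0 : t ≠ 0 := right_ne_zero_of_mul ht
  have hδt : Polynomial.evalRingHom t δ ≠ 0 := left_ne_zero_of_mul ht
  rw [hδ, map_det] at hδt
  have h1 := indep_of_minor σ hδt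
  set D := diagG W t⁻¹ (inv_ne_zero ht0) with hD
  have h2 : LinearIndependent K (fun k => coordChange K n D (f k) * coordChange K n g (q k)) := by
    apply indep_of_smul (fun k => t ^ (wt W (m k))) (fun k => pow_ne_zero _ ht0)
    have e : (fun k => t ^ (wt W (m k)) • (coordChange K n D (f k) * coordChange K n g (q k)))
        = fun k => MvPolynomial.map (Polynomial.evalRingHom t) (P k) := ?_
    · rw [e]; exact h1
    funext k
    simp only [P]
    rw [map_mul, map_C_eval, defo_eval W (m k) (f k) _ t ht0, smul_mul_assoc]
    intro m' hm'
    rcases hfl k m' hm' with h | h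
    · rw [h]
    · exact h.le
  have h3 := indep_coord D⁻¹ h2
  refine ⟨D⁻¹ * g, f, q, fun k => ⟨a k, b k, hab k, ?_, hq k⟩, ?_⟩
  · rw [← hma k]; exact hfV k
  · convert h3 using 2 with k
    rw [map_mul, coordChange_inv_left, coordChange_mul]

lemma ach_coord {d r : ℕ} (V U : ℕ → Set (PS K n)) (h : GL (Fin n) K)
    (hA : Ach d r (fun a => coordChange K n h '' V a) U) : Ach d r V U := by
  obtain ⟨g, p, q, hpq, hli⟩ := hA
  choose a b hab hp hq using hpq
  choose f hfV hfp using hp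
  refine ⟨h⁻¹ * g, f, q, fun k => ⟨a k, b k, hab k, hfV k, hq k⟩, ?_⟩
  have := indep_coord h⁻¹ hli
  convert this using 2 with k
  rw [map_mul, ← hfp k, coordChange_inv_left, coordChange_mul]

lemma ach_symm {d r : ℕ} {V U : ℕ → Set (PS K n)} (hA : Ach d r V U) : Ach d r U V := by
  obtain ⟨g, p, q, hpq, hli⟩ := hA
  refine ⟨g⁻¹, q, p, fun k => ?_, ?_⟩
  · obtain ⟨a, b, hab, hp, hq⟩ := hpq k
    exact ⟨b, a, by omega, hq, hp⟩
  · have := indep_coord g⁻¹ hli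
    convert this using 2 with k
    rw [map_mul, coordChange_inv_left, mul_comm]

lemma exists_indep_of_span {r : ℕ} {v : Fin r → PS K n} (hv : LinearIndependent K v)
    (T : Set (PS K n)) (hT : ∀ k, v k ∈ Submodule.span K T) :
    ∃ v' : Fin r → PS K n, (∀ k, v' k ∈ T) ∧ LinearIndependent K v' := by
  obtain ⟨b, hbT, hspan, hb⟩ := exists_linearIndependent K T
  have hle : Cardinal.mk (Fin r) ≤ Cardinal.mk b := by
    let B := Module.Basis.span hb
    have hv' : LinearIndependent K (fun k => (⟨v k, by
      simpa [hspan] using hT k⟩ : Submodule.span K (Set.range ((↑) : b → PS K n)))) :=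
      LinearIndependent.of_comp (Submodule.subtype _) hv
    have h1 := hv'.cardinal_le_rank
    rw [← B.mk_eq_rank''] at h1
    exact h1
  obtain ⟨e⟩ := Cardinal.le_def _ _ |>.mp hle
  exact ⟨fun k => e k, fun k => hbT (e k).2, hb.comp e e.injective⟩

lemma ach_span {d r : ℕ} {V U : ℕ → Set (PS K n)}
    (hA : Ach d r (fun a => (Submodule.span K (V a) : Set (PS K n))) U) : Ach d r V U := by
  obtain ⟨g, p, q, hpq, hli⟩ := hA
  obtain ⟨v', hv', hli'⟩ := exists_indep_of_span hli
    {x | ∃ a b, a + b = d ∧ ∃ f ∈ V a, ∃ h ∈ U b, x = f * coordChange K n g h} (by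
      intro k
      obtain ⟨a, b, hab, hp, hq⟩ := hpq k
      refine Submodule.span_induction (p := fun f _ => f * coordChange K n g (q k) ∈ _)
        ?_ ?_ ?_ ?_ hp
      · intro f hf
        exact Submodule.subset_span ⟨a, b, hab, f, hf, q k, hq, rfl⟩
      · simp
      · intro x y _ _ hx hy
        rw [add_mul]; exact Submodule.add_mem _ hx hy
      · intro c x _ hx
        rw [smul_mul_assoc]; exact Submodule.smul_mem _ _ hx)
  choose a b hab f hf h hh hx using hv'
  refine ⟨g, f, h, fun k => ⟨a k, b k, hab k, hf k, hh k⟩, ?_⟩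
  convert hli' using 2 with k
  exact (hx k).symm

end Deg
section Stab
variable {K n}

lemma mem_supp_mul_monomial {R : Type*} [CommRing R] {f : MvPolynomial (Fin n) R}
    {u m : Fin n →₀ ℕ} (h : m ∈ (f * monomial u 1).support) :
    ∃ m0 ∈ f.support, m = m0 + u := by
  rw [mem_support_iff, coeff_mul_monomial'] at h
  by_cases hu : u ≤ m
  · rw [if_pos hu, mul_one] at h
    exact ⟨m - u, mem_support_iff.mpr h, (tsub_add_cancel_of_le hu).symm⟩
  · rw [if_neg hu] at h; exact absurd rfl h

lemma LdE_add {R Γ : Type*} [CommRing R] [LinearOrder Γ] (w : (Fin n →₀ ℕ) → Γ)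
    (hw : ∀ a b u, w a < w b → w (a + u) < w (b + u))
    (N N' : Set (MvPolynomial (Fin n) R)) (u : Fin n →₀ ℕ)
    (hN : ∀ f ∈ N, f * monomial u 1 ∈ N') {m : Fin n →₀ ℕ} (hm : m ∈ LdE w N) :
    m + u ∈ LdE w N' := by
  obtain ⟨f, hf, h0, hl⟩ := hm
  refine ⟨f * monomial u 1, hN f hf, by simpa using h0, ?_⟩
  intro m' hm'
  obtain ⟨m0, hm0, rfl⟩ := mem_supp_mul_monomial hm'
  rcases hl m0 hm0 with h | h
  · left; rw [h]
  · right; exact hw _ _ _ h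

/-- degree a part of an ideal -/
def VI (I : Ideal (PS K n)) (a : ℕ) : Submodule K (PS K n) :=
  Submodule.restrictScalars K I ⊓ homogeneousSubmodule (Fin n) K a

lemma mem_VI {I : Ideal (PS K n)} {a : ℕ} {f : PS K n} :
    f ∈ VI I a ↔ f ∈ I ∧ f.IsHomogeneous a := Iff.rfl

lemma monomial_homog {R : Type*} [CommRing R] (u : Fin n →₀ ℕ) (c : R) :
    (monomial u c : MvPolynomial (Fin n) R).IsHomogeneous (expDeg n u) := by
  rw [homog_iff]
  intro m hm
  have := support_monomial_subset hm
  rw [Finset.mem_singleton] at this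
  rw [this]

def initE (W : Fin n → ℕ) (I : Ideal (PS K n)) : Set (Fin n →₀ ℕ) :=
  {m | m ∈ LdE (wt W) (VI I (expDeg n m) : Set (PS K n))}

lemma initE_upper (W : Fin n → ℕ) (I : Ideal (PS K n)) : IsUpperSet (initE W I) := by
  intro m m' hle hm
  obtain ⟨u, rfl⟩ := exists_add_of_le hle
  refine LdE_add (wt W) ?_ _ _ u ?_ hm
  · intro a b u h
    rw [wt_add, wt_add]; omega
  · intro f hf
    refine mem_VI.mpr ⟨I.mul_mem_right _ (mem_VI.mp hf).1, ?_⟩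
    rw [expDeg_add]
    exact (mem_VI.mp hf).2.mul (monomial_homog u 1)

def idE (K : Type) [Field K] {n : ℕ} (E : Set (Fin n →₀ ℕ)) (hE : IsUpperSet E) : Ideal (PS K n) where
  carrier := {f | ∀ m ∈ f.support, m ∈ E}
  add_mem' := by
    classical
    intro f g hf hg m hm
    rcases Finset.mem_union.mp (support_add hm) with h | h
    · exact hf m h
    · exact hg m h
  zero_mem' := by simp
  smul_mem' := by
    classical
    intro c f hf m hm
    obtain ⟨a, _, b, hb, rfl⟩ := Finset.mem_add.mp (support_mul c f hm)
    exact hE le_add_self (hf b hb)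

lemma mem_idE {E : Set (Fin n →₀ ℕ)} {hE : IsUpperSet E} {f : PS K n} :
    f ∈ idE K E hE ↔ ∀ m ∈ f.support, m ∈ E := Iff.rfl

lemma VI_idE_le (E : Set (Fin n →₀ ℕ)) (hE : IsUpperSet E) (a : ℕ) :
    VI (idE K E hE) a ≤ Submodule.span K (monS K E a) := by
  intro f hf
  rw [f.as_sum]
  apply Submodule.sum_mem
  intro m hm
  have : monomial m (coeff m f) = coeff m f • monomial m (1 : K) := by
    simp [smul_monomial]
  rw [this]
  apply Submodule.smul_mem
  apply Submodule.subset_span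
  exact ⟨m, (mem_VI.mp hf).1 m hm, homog_iff.mp (mem_VI.mp hf).2 m hm, rfl⟩

lemma ach_mono {d r : ℕ} {V V' U : ℕ → Set (PS K n)} (h : ∀ a ≤ d, V a ⊆ V' a)
    (hA : Ach d r V U) : Ach d r V' U := by
  obtain ⟨g, p, q, hpq, hli⟩ := hA
  refine ⟨g, p, q, fun k => ?_, hli⟩
  obtain ⟨a, b, hab, hp, hq⟩ := hpq k
  exact ⟨a, b, hab, h a (by omega) hp, hq⟩

lemma ach_initE [CharZero K] {d r : ℕ} (W : Fin n → ℕ) (I : Ideal (PS K n))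
    (U : ℕ → Set (PS K n)) (h : Ach d r (monS K (initE W I)) U) :
    Ach d r (fun a => (VI I a : Set (PS K n))) U :=
  ach_degen _ U W _ (fun _ hm => hm) h

/-- the transvection -/
def trG (K : Type) [Field K] {n : ℕ} (p q : Fin n) (h : p ≠ q) : GL (Fin n) K :=
  Matrix.GeneralLinearGroup.mkOfDetNeZero (Matrix.transvection p q (1 : K)) (by
    rw [Matrix.det_transvection_of_ne p q h]; exact one_ne_zero)

lemma trG_X {p q : Fin n} (h : p ≠ q) (i : Fin n) :
    coordChange K n (trG K p q h) (X i) = if i = q then X q + X p else X i := by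
  rw [coordChange_X]
  have : ∀ j, ((trG K p q h : GL (Fin n) K) : Matrix (Fin n) (Fin n) K) j i
      = (if j = i then 1 else 0) + if p = j ∧ q = i then 1 else 0 := by
    intro j
    simp [trG, Matrix.GeneralLinearGroup.mkOfDetNeZero, Matrix.transvection, Matrix.one_apply,
      Matrix.single_apply]
  simp only [this, add_smul, Finset.sum_add_distrib, ite_smul, one_smul, zero_smul]
  by_cases hi : i = q
  · subst hi
    simp
  · have : ¬ q = i := fun h => hi h.symm
    simp [hi, this]

lemma trG_monomial {p q : Fin n} (h : p ≠ q) (m : Fin n →₀ ℕ) :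
    coordChange K n (trG K p q h) (monomial m 1) =
      ∑ l ∈ Finset.range (m q + 1),
        monomial (m - Finsupp.single q l + Finsupp.single p l) ((m q).choose l : K) := by
  have h0 : (monomial m 1 : PS K n) = X q ^ (m q) * monomial (m.erase q) 1 := by
    rw [X_pow_eq_monomial, monomial_mul, one_mul, Finsupp.single_add_erase]
  have h1 : coordChange K n (trG K p q h) (monomial (m.erase q) 1) = monomial (m.erase q) 1 := by
    rw [monomial_eq, map_mul, algHom_C, Finsupp.prod_fintype _ _ (by simp), map_prod]
    congr 1
    apply Finset.prod_congr rfl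
    intro i _
    rw [map_pow, trG_X]
    by_cases hi : i = q
    · subst hi; simp
    · rw [if_neg hi]
  rw [h0, map_mul, map_pow, trG_X, if_pos rfl, h1, add_comm (X q), add_pow, Finset.sum_mul]
  apply Finset.sum_congr rfl
  intro l hl
  have hl' : l ≤ m q := by simpa [Nat.lt_succ_iff] using hl
  rw [X_pow_eq_monomial, X_pow_eq_monomial, monomial_mul, ← C_eq_coe_nat, mul_comm _ (C _), mul_assoc,
    monomial_mul, C_mul_monomial]
  have e : Finsupp.single p l + Finsupp.single q (m q - l) + m.erase q =
      m - Finsupp.single q l + Finsupp.single p l := by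
    ext i
    simp only [Finsupp.add_apply, Finsupp.tsub_apply, Finsupp.single_apply, Finsupp.erase_apply]
    by_cases hi : i = q
    · subst hi; simp [h]
    · have : ¬ q = i := fun h => hi h.symm
      simp [hi, this]; omega
  rw [← e]
  congr 1
  · simp [add_assoc]

lemma trG_coeff_ne {p q : Fin n} (h : p ≠ q) (m v : Fin n →₀ ℕ)
    (hv : coeff v (coordChange K n (trG K p q h) (monomial m 1)) ≠ 0) :
    ∃ l ≤ m q, v = m - Finsupp.single q l + Finsupp.single p l := by
  rw [trG_monomial, coeff_sum] at hv
  obtain ⟨l, hl, hne⟩ := Finset.exists_ne_zero_of_sum_ne_zero hv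
  refine ⟨l, by simpa [Nat.lt_succ_iff] using hl, ?_⟩
  rw [coeff_monomial] at hne
  by_contra hc
  rw [if_neg (Ne.symm hc)] at hne
  exact hne rfl

lemma trG_coeff {p q : Fin n} (h : p ≠ q) (m : Fin n →₀ ℕ) (l : ℕ) (hl : l ≤ m q) :
    coeff (m - Finsupp.single q l + Finsupp.single p l)
      (coordChange K n (trG K p q h) (monomial m 1)) = ((m q).choose l : K) := by
  rw [trG_monomial, coeff_sum, Finset.sum_eq_single l]
  · simp
  · intro b _ hb
    rw [coeff_monomial, if_neg]
    intro hc
    apply hb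
    have hc := DFunLike.congr_fun hc p
    have hc' : m p - 0 + b = m p - 0 + l := by
      simpa [Finsupp.single_apply, h, h.symm] using hc
    omega
  · intro hc
    simp at hc; omega

lemma wt_shift (W : Fin n → ℕ) {p q : Fin n} (m : Fin n →₀ ℕ) (l : ℕ) (hl : l ≤ m q) :
    wt W (m - Finsupp.single q l + Finsupp.single p l) + W q * l = wt W m + W p * l := by
  have : m = (m - Finsupp.single q l) + Finsupp.single q l :=
    (tsub_add_cancel_of_le (by simpa using hl)).symm
  conv_rhs => rw [this]
  rw [wt_add, wt_add, wt_single, wt_single]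
  ring

lemma trG_wt (W : Fin n → ℕ) {p q : Fin n} (h : p ≠ q) (hW : W q < W p) (m v : Fin n →₀ ℕ)
    (hv : coeff v (coordChange K n (trG K p q h) (monomial m 1)) ≠ 0) : v = m ∨ wt W m < wt W v := by
  obtain ⟨l, hl, rfl⟩ := trG_coeff_ne h m v hv
  rcases Nat.eq_zero_or_pos l with rfl | hpos
  · left; simp
  · right
    have := wt_shift (p := p) W m l hl
    have h2 : W q * l < W p * l := Nat.mul_lt_mul_of_pos_right hW hpos
    omega

open Classical in
lemma grow_aux {d a : ℕ} (ha : a ≤ d) (N : Submodule K (PS K n))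
    (hN : ∀ f ∈ N, f.IsHomogeneous a) (s : ℕ) (T : Finset (Fin n →₀ ℕ))
    (P : (Fin n →₀ ℕ) → PS K n) (hP : ∀ m ∈ T, P m ∈ N)
    (τ : (Fin n →₀ ℕ) → (Fin n →₀ ℕ)) (hs : ∀ m ∈ T, s ≤ wt (lexW n d) (τ m))
    (h1 : ∀ m ∈ T, coeff (τ m) (P m) ≠ 0)
    (h2 : ∀ m ∈ T, ∀ m' ∈ T, coeff (τ m') (P m) ≠ 0 →
      wt (lexW n d) (τ m') ≤ wt (lexW n d) (τ m) → m = m') :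
    T.card ≤ ((monF n a).filter fun m => m ∈ LdE (wt (lexW n d)) (N : Set (PS K n)) ∧
      s ≤ wt (lexW n d) m).card := by
  have := card_le_LdE (wt (lexW n d)) a (wt_injOn ha) N hN (fun m => s ≤ wt (lexW n d) m)
    (fun m m' h h' => by omega) (fun m : T => P m) (fun m => hP m m.2) (by
      intro c hc
      obtain ⟨k0, hk0⟩ := Function.ne_iff.mp hc
      obtain ⟨k, hk, hmin⟩ := Finset.exists_min_image (Finset.univ.filter fun k : T => c k ≠ 0)
        (fun k => wt (lexW n d) (τ k.1)) ⟨k0, by simpa using hk0⟩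
      simp only [Finset.mem_filter, Finset.mem_univ, true_and] at hk hmin
      refine ⟨τ k.1, ?_, hs k.1 k.2⟩
      rw [coeff_sum, Finset.sum_eq_single k]
      · rw [coeff_smul]
        exact mul_ne_zero hk (h1 k.1 k.2)
      · intro b _ hb
        rw [coeff_smul, smul_eq_mul, mul_eq_zero]
        by_contra hcon
        push Not at hcon
        exact hb (Subtype.ext (h2 b.1 b.2 k.1 k.2 hcon.2 (hmin b hcon.1)))
      · simp)
  rw [Fintype.card_coe] at this
  convert this

/-- moved monomial ideal -/
def mvI (E : Set (Fin n →₀ ℕ)) (hE : IsUpperSet E) (g : GL (Fin n) K) : Ideal (PS K n) :=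
  Ideal.comap (coordChange K n g⁻¹) (idE K E hE)

lemma mem_mvI (E : Set (Fin n →₀ ℕ)) (hE : IsUpperSet E) (g : GL (Fin n) K) {m : Fin n →₀ ℕ}
    (hm : m ∈ E) : coordChange K n g (monomial m 1) ∈ VI (mvI E hE g) (expDeg n m) := by
  refine mem_VI.mpr ⟨?_, coordChange_homog g (monomial_homog m 1)⟩
  rw [mvI, Ideal.mem_comap, coordChange_inv_left, mem_idE]
  intro m' hm'
  have := support_monomial_subset hm'
  rw [Finset.mem_singleton] at this
  rwa [this]

lemma ach_mvI {d r : ℕ} (E : Set (Fin n →₀ ℕ)) (hE : IsUpperSet E) (g : GL (Fin n) K)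
    (U : ℕ → Set (PS K n)) (h : Ach d r (fun a => (VI (mvI E hE g) a : Set (PS K n))) U) :
    Ach d r (monS K E) U := by
  apply ach_span
  apply ach_coord _ _ g
  refine ach_mono ?_ h
  intro a _ f hf
  refine ⟨coordChange K n g⁻¹ f, VI_idE_le E hE a (mem_VI.mpr ⟨(mem_VI.mp hf).1,
    coordChange_homog _ (mem_VI.mp hf).2⟩), ?_⟩
  rw [← coordChange_mul, mul_inv_cancel, coordChange_one]

open Classical in
def cnt (d : ℕ) (E : Set (Fin n →₀ ℕ)) (a s : ℕ) : ℕ :=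
  ((monF n a).filter fun m => m ∈ E ∧ s ≤ wt (lexW n d) m).card

lemma cnt_initE (d : ℕ) (I : Ideal (PS K n)) (a s : ℕ) :
    cnt d (initE (lexW n d) I) a s = (open Classical in ((monF n a).filter fun m =>
      m ∈ LdE (wt (lexW n d)) (VI I a : Set (PS K n)) ∧ s ≤ wt (lexW n d) m).card) := by
  classical
  unfold cnt
  congr 1
  apply Finset.filter_congr
  intro m hm
  rw [mem_monF] at hm
  simp only [initE, Set.mem_ofPred_eq, hm]

lemma cnt_le {d a : ℕ} (ha : a ≤ d) (hd : 0 < d) (E : Set (Fin n →₀ ℕ)) (hE : IsUpperSet E)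
    {p q : Fin n} (h : p < q) (s : ℕ) :
    cnt d E a s ≤ cnt d (initE (lexW n d) (mvI E hE (trG K p q h.ne))) a s := by
  classical
  rw [cnt_initE]
  unfold cnt
  apply grow_aux ha _ (fun f hf => (mem_VI.mp hf).2) s _
    (fun m => coordChange K n (trG K p q h.ne) (monomial m 1)) _ id
  · intro m hm
    exact (Finset.mem_filter.mp hm).2.2
  · intro m hm
    have := trG_coeff (K := K) h.ne m 0 (Nat.zero_le _)
    simp at this
    simp [this]
  · intro m hm m' hm' hc hw
    rcases trG_wt (lexW n d) h.ne (lexW_lt hd h) m m' hc with h | h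
    · exact h.symm
    · simp at hw; omega
  · intro m hm
    obtain ⟨h1, h2, _⟩ := Finset.mem_filter.mp hm
    rw [mem_monF] at h1
    rw [← h1]
    exact mem_mvI E hE _ h2

lemma cnt_lt [CharZero K] {d a : ℕ} (ha : a ≤ d) (hd : 0 < d) (E : Set (Fin n →₀ ℕ)) (hE : IsUpperSet E)
    {p q : Fin n} (h : p < q) (m1 : Fin n →₀ ℕ) (hm1 : m1 ∈ E) (hdeg : expDeg n m1 = a)
    (hq : m1 q ≠ 0) (hn : mv m1 q p ∉ E) :
    cnt d E a (wt (lexW n d) (mv m1 q p)) <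
      cnt d (initE (lexW n d) (mvI E hE (trG K p q h.ne))) a (wt (lexW n d) (mv m1 q p)) := by
  classical
  rw [cnt_initE]
  unfold cnt
  set m2 := mv m1 q p with hm2
  have hW := lexW_lt (n := n) hd h
  have hdeg2 : expDeg n m2 = a := by rw [hm2, expDeg_mv p hq, hdeg]
  have hlt : wt (lexW n d) m1 < wt (lexW n d) m2 := by
    have := wt_shift (p := p) (lexW n d) m1 1 (Nat.pos_of_ne_zero hq)
    have e : m2 = m1 - Finsupp.single q 1 + Finsupp.single p 1 := rfl
    rw [← e] at this
    omega
  set T := (monF n a).filter fun m => m ∈ E ∧ wt (lexW n d) m2 ≤ wt (lexW n d) m with hT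
  have hnot : m1 ∉ T := by
    intro hc
    have := (Finset.mem_filter.mp hc).2.2
    omega
  rw [← Nat.succ_le_iff, Nat.succ_eq_add_one, ← Finset.card_insert_of_notMem hnot]
  have hmem : ∀ m ∈ insert m1 T, m ∈ E ∧ expDeg n m = a := by
    intro m hm
    rcases Finset.mem_insert.mp hm with rfl | hm
    · exact ⟨hm1, hdeg⟩
    · obtain ⟨h1, h2, _⟩ := Finset.mem_filter.mp hm
      exact ⟨h2, by simpa using h1⟩
  have hT' : ∀ m ∈ insert m1 T, m ≠ m1 → wt (lexW n d) m2 ≤ wt (lexW n d) m := by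
    intro m hm hne
    exact (Finset.mem_filter.mp ((Finset.mem_insert.mp hm).resolve_left hne)).2.2
  apply grow_aux ha _ (fun f hf => (mem_VI.mp hf).2) _ _
    (fun m => coordChange K n (trG K p q h.ne) (monomial m 1)) _ (fun m => if m = m1 then m2 else m)
  · intro m hm
    by_cases hc : m = m1
    · simp [hc]
    · simp only [hc, if_false]; exact hT' m hm hc
  · intro m hm
    by_cases hc : m = m1
    · subst hc
      have := trG_coeff (K := K) h.ne m 1 (Nat.pos_of_ne_zero hq)
      rw [if_pos rfl]
      change coeff (m - Finsupp.single q 1 + Finsupp.single p 1) _ ≠ 0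
      rw [this]
      simpa using hq
    · have := trG_coeff (K := K) h.ne m 0 (Nat.zero_le _)
      simp at this
      simp [this, hc]
  · intro m hm m' hm' hc hw
    by_cases e : m = m1 <;> by_cases e' : m' = m1
    · rw [e, e']
    · exfalso
      subst e
      simp only [if_true, e', if_false] at hw hc
      have h1 := hT' m' hm' e'
      have h2 := wt_injOn ha (by simpa using (hmem m' hm').2) (by simpa using hdeg2)
        (le_antisymm hw h1)
      exact hn (h2 ▸ (hmem m' hm').1)
    · exfalso
      subst e'
      simp only [if_true, e, if_false] at hw hc
      rcases trG_wt (lexW n d) h.ne hW m m2 hc with h | h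
      · exact hn (h ▸ (hmem m hm).1)
      · omega
    · simp only [e, e', if_false] at hw hc
      rcases trG_wt (lexW n d) h.ne hW m m' hc with h | h
      · exact h.symm
      · omega
  · intro m hm
    rw [← (hmem m hm).2]
    exact mem_mvI E hE _ (hmem m hm).1

open Classical in
theorem exists_stable [CharZero K] (I : Ideal (PS K n)) (d : ℕ) :
    ∃ E : Set (Fin n →₀ ℕ), SStab E ∧ IsUpperSet E ∧
      (∀ a ≤ d, hilb K n I a ≤ ((monF n a).filter (· ∈ E)).card) ∧
      ∀ r U, Ach d r (monS K E) U → Ach d r (fun a => (VI I a : Set (PS K n))) U := by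
  -- D is positive and bounds d
  set D := d + 1 with hD
  let Re : Set (Set (Fin n →₀ ℕ)) := {E | IsUpperSet E ∧
      (∀ a ≤ d, hilb K n I a ≤ cnt D E a 0) ∧
      ∀ r U, Ach d r (monS K E) U → Ach d r (fun a => (VI I a : Set (PS K n))) U}
  have hne : Re.Nonempty := by
    refine ⟨initE (lexW n D) I, initE_upper _ _, ?_, fun r U h => ach_initE _ _ _ h⟩
    intro a ha
    rw [cnt_initE]
    apply le_of_eq
    simp only [Nat.zero_le, and_true]
    exact (card_LdE_eq (wt (lexW n D)) a (wt_injOn (by omega)) (VI I a) inf_le_right).symm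
  let S : ℕ := ∑ a ∈ Finset.range (d + 1), ∑ m ∈ monF n a, wt (lexW n D) m
  let pot : Set (Fin n →₀ ℕ) → ℕ := fun E =>
    ∑ a ∈ Finset.range (d + 1), ∑ s ∈ Finset.range (S + 1), cnt D E a s
  let B : ℕ := ∑ a ∈ Finset.range (d + 1), ∑ s ∈ Finset.range (S + 1), (monF n a).card
  have hpB : ∀ E, pot E ≤ B := fun E => Finset.sum_le_sum fun a _ => Finset.sum_le_sum fun s _ =>
    Finset.card_filter_le _ _
  obtain ⟨E, ⟨hEu, hEc, hEA⟩, hmin⟩ := (measure (fun E => B - pot E)).wf.has_min Re hne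
  have hstab : ∀ m1 ∈ E, expDeg n m1 ≤ d → ∀ p q, p < q → m1 q ≠ 0 → mv m1 q p ∈ E := by
    intro m1 hm1 hdeg p q hpq hq
    by_contra hn
    set E' := initE (lexW n D) (mvI E hEu (trG K p q hpq.ne)) with hE'
    have hle : ∀ a ≤ d, ∀ s, cnt D E a s ≤ cnt D E' a s := fun a ha s =>
      cnt_le (by omega) (by omega) E hEu hpq s
    have hRe : E' ∈ Re := by
      refine ⟨initE_upper _ _, fun a ha => (hEc a ha).trans (hle a ha 0), fun r U h => ?_⟩
      exact hEA r U (ach_mvI E hEu _ U (ach_initE _ _ _ h))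
    apply hmin E' hRe
    change B - pot E' < B - pot E
    have hlt : pot E < pot E' := by
      apply Finset.sum_lt_sum
      · intro a ha
        exact Finset.sum_le_sum fun s _ => hle a (by simpa [Nat.lt_succ_iff] using ha) s
      · refine ⟨expDeg n m1, by simpa [Nat.lt_succ_iff] using hdeg, ?_⟩
        apply Finset.sum_lt_sum
        · intro s _; exact hle _ hdeg s
        · refine ⟨wt (lexW n D) (mv m1 q p), ?_, cnt_lt (by omega) (by omega) E hEu hpq m1 hm1 rfl hq hn⟩
          rw [Finset.mem_range, Nat.lt_succ_iff]
          refine le_trans ?_ (Finset.single_le_sum (f := fun a => ∑ m ∈ monF n a, wt (lexW n D) m)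
            (fun _ _ => Nat.zero_le _) (a := expDeg n m1) (by simpa [Nat.lt_succ_iff] using hdeg))
          exact Finset.single_le_sum (f := fun m => wt (lexW n D) m)
            (fun _ _ => Nat.zero_le _) (by simp [expDeg_mv p hq])
    have := hpB E'
    omega
  refine ⟨{m | m ∈ E ∨ d < expDeg n m}, ?_, ?_, ?_, ?_⟩
  · intro u hu p q hpq hq
    rw [Set.mem_ofPred_eq, expDeg_mv p hq]
    rcases hu with hu | hu
    · by_cases hc : d < expDeg n u
      · exact Or.inr hc
      · exact Or.inl (hstab u hu (by omega) p q hpq hq)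
    · exact Or.inr hu
  · intro u v huv hu
    rcases hu with hu | hu
    · exact Or.inl (hEu huv hu)
    · exact Or.inr (lt_of_lt_of_le hu (expDeg_mono huv))
  · intro a ha
    refine (hEc a ha).trans (Finset.card_le_card ?_)
    intro m hm
    simp only [Finset.mem_filter] at hm ⊢
    exact ⟨hm.1, Or.inl hm.2.1⟩
  · intro r U h
    apply hEA
    refine ach_mono ?_ h
    rintro a ha f ⟨m, hm, hma, rfl⟩
    rcases hm with hm | hm
    · exact ⟨m, hm, hma, rfl⟩
    · omega

end Stab
section Fin1
variable {K n}

def revG (K : Type) [Field K] (n : ℕ) : GL (Fin n) K :=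
  ⟨Matrix.of fun j i => if j = Fin.rev i then 1 else 0,
   Matrix.of fun j i => if j = Fin.rev i then 1 else 0,
   by ext i j; simp [Matrix.mul_apply, Matrix.one_apply],
   by ext i j; simp [Matrix.mul_apply, Matrix.one_apply]⟩

lemma revG_X (i : Fin n) : coordChange K n (revG K n) (X i) = X (Fin.rev i) := by
  rw [coordChange_X]
  simp [revG]

lemma revG_monomial (m : Fin n →₀ ℕ) :
    coordChange K n (revG K n) (monomial m 1) = monomial (rv m) 1 := by
  rw [monomial_eq, monomial_eq, map_mul, algHom_C, Finsupp.prod_fintype _ _ (by simp),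
    Finsupp.prod_fintype _ _ (by simp), map_prod]
  congr 1
  rw [← Equiv.prod_comp Fin.revPerm]
  apply Finset.prod_congr rfl
  intro i _
  rw [map_pow, revG_X]
  simp [rv_apply]

open Classical in
lemma mem_prodF {E F : Set (Fin n →₀ ℕ)} {d : ℕ} {w : Fin n →₀ ℕ} :
    w ∈ prodF n E F d ↔ expDeg n w = d ∧ ∃ e ∈ E, ∃ f ∈ F, e + f = w := by
  simp [prodF]

lemma ach_mon (d : ℕ) (E F : Set (Fin n →₀ ℕ)) :
    Ach d (prodF n E (rvS F) d).card (monS K E) (monS K F) := by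
  set T := prodF n E (rvS F) d with hT
  have hT' : ∀ k : Fin T.card, (T.equivFin.symm k : Fin n →₀ ℕ) ∈ T := fun k => (T.equivFin.symm k).2
  have h1 := fun k => mem_prodF.mp (hT' k)
  choose hd e he f hf hef using h1
  refine ⟨revG K n, fun k => monomial (e k) 1, fun k => monomial (rv (f k)) 1, fun k => ?_, ?_⟩
  · refine ⟨expDeg n (e k), expDeg n (f k), ?_, ⟨e k, he k, rfl, rfl⟩, ⟨rv (f k), hf k, ?_, rfl⟩⟩
    · rw [← expDeg_add, hef k, hd k]
    · rw [expDeg_rv]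
  · have h2 : LinearIndependent K (fun k : Fin T.card => (monomial (T.equivFin.symm k : Fin n →₀ ℕ) 1 : PS K n)) := by
      have := (basisMonomials (Fin n) K).linearIndependent.comp
        (fun k : Fin T.card => (T.equivFin.symm k : Fin n →₀ ℕ))
        (Subtype.val_injective.comp T.equivFin.symm.injective)
      simpa [Function.comp_def] using this
    convert h2 using 2 with k
    rw [revG_monomial, rv_rv, monomial_mul, hef k, one_mul]

def expS (I : Ideal (PS K n)) : Set (Fin n →₀ ℕ) := {m | monomial m (1 : K) ∈ I}

lemma expS_upper (I : Ideal (PS K n)) : IsUpperSet (expS I) := by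
  intro m m' hle hm
  obtain ⟨u, rfl⟩ := exists_add_of_le hle
  have := I.mul_mem_right (monomial u 1) hm
  rwa [monomial_mul, one_mul] at this

lemma toLex_injOn (a : ℕ) : Set.InjOn (fun m : Fin n →₀ ℕ => toLex m) (monF n a) :=
  fun _ _ _ _ h => toLex_inj.mp h

open Classical in
lemma card_expS (I : Ideal (PS K n)) (hI : IsMonomialIdeal K n I) (a : ℕ) :
    ((monF n a).filter (· ∈ expS I)).card = hilb K n I a := by
  have := card_LdE_eq (fun m : Fin n →₀ ℕ => toLex m) a (toLex_injOn a) (VI I a) inf_le_right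
  rw [show hilb K n I a = Module.finrank K (VI I a) from rfl, ← this]
  congr 1
  apply Finset.filter_congr
  intro m hm
  rw [mem_monF] at hm
  constructor
  · intro h
    refine ⟨monomial m 1, mem_VI.mpr ⟨h, hm ▸ monomial_homog m 1⟩, by simp, ?_⟩
    intro m' hm'
    left
    simpa using support_monomial_subset hm'
  · rintro ⟨f, hf, h0, _⟩
    exact hI f (mem_VI.mp hf).1 m (mem_support_iff.mpr h0)

open Classical in
lemma hilb_mul_le (I J : Ideal (PS K n)) (hI : IsMonomialIdeal K n I) (hJ : IsMonomialIdeal K n J)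
    (d : ℕ) : hilb K n (I * J) d ≤ (prodF n (expS I) (expS J) d).card := by
  have := card_LdE_eq (fun m : Fin n →₀ ℕ => toLex m) d (toLex_injOn d) (VI (I * J) d) inf_le_right
  rw [show hilb K n (I * J) d = Module.finrank K (VI (I * J) d) from rfl, ← this]
  apply Finset.card_le_card
  intro m hm
  obtain ⟨h1, f, hf, h0, _⟩ := Finset.mem_filter.mp hm
  rw [mem_monF] at h1
  rw [mem_prodF]
  refine ⟨h1, ?_⟩
  have key : ∀ f ∈ I * J, ∀ m ∈ f.support, ∃ e ∈ expS I, ∃ f ∈ expS J, e + f = m := by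
    intro f hf
    refine Submodule.mul_induction_on hf ?_ ?_
    · intro x hx y hy m hm
      obtain ⟨a, ha, b, hb, rfl⟩ := Finset.mem_add.mp (support_mul x y hm)
      exact ⟨a, hI x hx a ha, b, hJ y hy b hb, rfl⟩
    · intro x y hx hy m hm
      rcases Finset.mem_union.mp (support_add hm) with h | h
      · exact hx m h
      · exact hy m h
  exact key f (mem_VI.mp hf).1 m (mem_support_iff.mpr h0)

lemma oplexLt_rv {u v : Fin n →₀ ℕ} (h : lexLt n u v) : oplexLt n (rv u) (rv v) := by
  obtain ⟨i, h1, h2⟩ := h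
  refine ⟨Fin.rev i, ?_, ?_⟩
  · intro j hj
    rw [rv_apply, rv_apply]
    apply h1
    change j > Fin.rev i at hj
    have := Fin.rev_lt_rev.mpr hj
    rwa [Fin.rev_rev] at this
  · simpa [rv_apply] using h2

theorem ach_main [CharZero K] (I J : Ideal (PS K n))
    (Ilex : Ideal (PS K n)) (hIlex : IsLexIdeal K n Ilex)
    (hIlexHilb : ∀ d : ℕ, hilb K n Ilex d = hilb K n I d)
    (Jop : Ideal (PS K n)) (hJop : IsOplexIdeal K n Jop)
    (hJopHilb : ∀ d : ℕ, hilb K n Jop d = hilb K n J d) (d : ℕ) :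
    ∃ r, hilb K n (Ilex * Jop) d ≤ r ∧
      Ach d r (fun a => (VI I a : Set (PS K n))) (fun a => (VI J a : Set (PS K n))) := by
  classical
  obtain ⟨E, hE, hEu, hEc, hEA⟩ := exists_stable I d
  obtain ⟨F, hF, hFu, hFc, hFA⟩ := exists_stable J d
  refine ⟨(prodF n E (rvS F) d).card, ?_, ?_⟩
  · refine (hilb_mul_le Ilex Jop hIlex.1 hJop.1 d).trans ?_
    rw [← rvS_rvS (expS Jop)]
    apply prodF_lex_lex_le hE hEu _ (expS_upper Ilex) hF hFu _ (upper_rvS (expS_upper Jop)) d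
    · intro a ha
      rw [card_expS Ilex hIlex.1, hIlexHilb]
      convert hEc a ha
    · intro a ha
      have : ((monF n a).filter (· ∈ rvS (expS Jop))).card = ((monF n a).filter (· ∈ expS Jop)).card := by
        apply Finset.card_bij (fun u _ => rv u)
        · intro u hu
          simp only [Finset.mem_filter, mem_monF, expDeg_rv] at hu ⊢
          exact hu
        · intro u _ v _ h
          rw [← rv_rv u, h, rv_rv]
        · intro u hu
          refine ⟨rv u, ?_, rv_rv u⟩
          simp only [Finset.mem_filter, mem_monF, expDeg_rv] at hu ⊢
          refine ⟨hu.1, ?_⟩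
          change rv (rv u) ∈ expS Jop
          rw [rv_rv]; exact hu.2
      have h2 := hFc a ha
      rw [← hJopHilb, ← card_expS Jop hJop.1] at h2
      rw [← this] at h2
      convert h2
    · intro u hu v h1 h2
      exact hIlex.2 u v h1 hu h2
    · intro u hu v h1 h2
      exact hJop.2 (rv u) (rv v) (by rw [expDeg_rv, expDeg_rv, h1]) hu (oplexLt_rv h2)
  · exact hEA _ _ (ach_symm (hFA _ _ (ach_symm (ach_mon d E F))))

end Fin1
section Gen
variable {K n}

/-- generic coordinate change -/
def genC (K : Type) [Field K] (n : ℕ) :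
    PS K n →+* MvPolynomial (Fin n) (MvPolynomial (Fin n × Fin n) K) :=
  MvPolynomial.eval₂Hom (C.comp C) (fun i => ∑ j, C (X (j, i)) * X j)

def spc (g : GL (Fin n) K) :
    MvPolynomial (Fin n) (MvPolynomial (Fin n × Fin n) K) →+* PS K n :=
  MvPolynomial.map (MvPolynomial.eval (fun p => (g : Matrix (Fin n) (Fin n) K) p.1 p.2))

lemma spc_genC (g : GL (Fin n) K) (f : PS K n) : spc g (genC K n f) = coordChange K n g f := by
  have : (spc g).comp (genC K n) = (coordChange K n g : PS K n →+* PS K n) := by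
    apply MvPolynomial.ringHom_ext
    · intro c
      simp [spc, genC, algHom_C]
    · intro i
      simp [spc, genC, coordChange_X, smul_eq_C_mul]
  exact RingHom.congr_fun this f

lemma spc_map (g : GL (Fin n) K) (f : PS K n) : spc g (MvPolynomial.map C f) = f := by
  rw [spc, MvPolynomial.map_map]
  have : (MvPolynomial.eval (fun p : Fin n × Fin n => (g : Matrix (Fin n) (Fin n) K) p.1 p.2)).comp C
      = RingHom.id K := by ext; simp
  rw [this, MvPolynomial.map_id]

lemma genC_homog {a : ℕ} {f : PS K n} (hf : f.IsHomogeneous a) : (genC K n f).IsHomogeneous a := by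
  have := hf.eval₂ (n := 1) (C.comp C) (fun i => ∑ j, C (X (j, i)) * X j)
    (fun c => isHomogeneous_C _ _) (by
      intro i
      apply IsHomogeneous.sum
      intro j _
      have := (isHomogeneous_C (Fin n) (X (j, i) : MvPolynomial (Fin n × Fin n) K)).mul
        (isHomogeneous_X _ j)
      simpa using this)
  rw [one_mul] at this
  exact this

def genI (I J : Ideal (PS K n)) : Ideal (MvPolynomial (Fin n) (MvPolynomial (Fin n × Fin n) K)) :=
  Ideal.span {x | ∃ f ∈ I, ∃ h ∈ J, x = MvPolynomial.map C f * genC K n h}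

lemma spc_genI (I J : Ideal (PS K n)) (g : GL (Fin n) K)
    {x : MvPolynomial (Fin n) (MvPolynomial (Fin n × Fin n) K)} (hx : x ∈ genI I J) :
    spc g x ∈ I * Ideal.map (coordChange K n g) J := by
  have : genI I J ≤ Ideal.comap (spc g) (I * Ideal.map (coordChange K n g) J) := by
    rw [genI, Ideal.span_le]
    rintro _ ⟨f, hf, h, hh, rfl⟩
    rw [SetLike.mem_coe, Ideal.mem_comap, map_mul, spc_map, spc_genC]
    exact Ideal.mul_mem_mul hf (Ideal.mem_map_of_mem _ hh)
  exact this hx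

def genN (I J : Ideal (PS K n)) (d : ℕ) : Submodule (MvPolynomial (Fin n × Fin n) K)
    (MvPolynomial (Fin n) (MvPolynomial (Fin n × Fin n) K)) :=
  Submodule.restrictScalars _ (genI I J) ⊓ homogeneousSubmodule (Fin n) _ d

lemma mem_genN {I J : Ideal (PS K n)} {d : ℕ}
    {x : MvPolynomial (Fin n) (MvPolynomial (Fin n × Fin n) K)} :
    x ∈ genN I J d ↔ x ∈ genI I J ∧ x.IsHomogeneous d := Iff.rfl

def lx (m : Fin n →₀ ℕ) : Lex (Fin n →₀ ℕ) := toLex m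

lemma lx_add (a b u : Fin n →₀ ℕ) (h : lx a < lx b) : lx (a + u) < lx (b + u) := by
  obtain ⟨i, h1, h2⟩ := h
  refine ⟨i, fun j hj => ?_, ?_⟩
  · have := h1 j hj
    simp only [lx, ofLex_toLex, Finsupp.add_apply] at this ⊢
    rw [this]
  · simp only [lx, ofLex_toLex, Finsupp.add_apply] at h2 ⊢
    omega

lemma lx_injOn (a : ℕ) : Set.InjOn (lx (n := n)) (monF n a) :=
  fun _ _ _ _ h => toLex_inj.mp h

def genM (I J : Ideal (PS K n)) : Set (Fin n →₀ ℕ) :=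
  {m | m ∈ LdE lx (genN I J (expDeg n m) : Set (MvPolynomial (Fin n) (MvPolynomial (Fin n × Fin n) K)))}

open Classical in
lemma ach_le_genM (I J : Ideal (PS K n)) {d r : ℕ}
    (h : Ach d r (fun a => (VI I a : Set (PS K n))) (fun a => (VI J a : Set (PS K n)))) :
    r ≤ ((monF n d).filter (· ∈ genM I J)).card := by
  obtain ⟨g, p, q, hpq, hli⟩ := h
  let P : Fin r → MvPolynomial (Fin n) (MvPolynomial (Fin n × Fin n) K) := fun k =>
    MvPolynomial.map C (p k) * genC K n (q k)
  have hP : ∀ k, P k ∈ genN I J d := by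
    intro k
    obtain ⟨a, b, hab, hp, hq⟩ := hpq k
    refine mem_genN.mpr ⟨Ideal.subset_span ⟨p k, (mem_VI.mp hp).1, q k, (mem_VI.mp hq).1, rfl⟩, ?_⟩
    rw [← hab]
    exact ((mem_VI.mp hp).2.map C).mul (genC_homog (mem_VI.mp hq).2)
  have hs : (fun k => p k * coordChange K n g (q k)) = fun k => spc g (P k) := by
    funext k
    simp only [P]
    rw [map_mul, spc_map, spc_genC]
  rw [hs] at hli
  obtain ⟨σ, hσ⟩ := exists_minor hli
  simp only [spc] at hσ
  rw [← map_det] at hσ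
  have hli' := indep_of_minor σ (v := P) (by intro h0; rw [h0, map_zero] at hσ; exact hσ rfl)
  have := card_le_LdE lx d (lx_injOn d) (genN I J d) (fun f hf => (mem_genN.mp hf).2)
    (fun _ => True) (fun _ _ _ _ => trivial) P hP (by
      intro c hc
      have hne : ∑ k, c k • P k ≠ 0 := by
        intro h0
        exact hc (funext fun k => Fintype.linearIndependent_iff.mp hli' c h0 k)
      obtain ⟨m, hm⟩ := MvPolynomial.ne_zero_iff.mp hne
      exact ⟨m, hm, trivial⟩)
  rw [Fintype.card_fin] at this
  refine this.trans (Finset.card_le_card ?_)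
  intro m hm
  simp only [Finset.mem_filter] at hm
  obtain ⟨h1, h2, _⟩ := hm
  refine Finset.mem_filter.mpr ⟨h1, ?_⟩
  rw [mem_monF] at h1
  simp only [genM, Set.mem_ofPred_eq, h1]
  exact h2

lemma genM_spec (I J : Ideal (PS K n)) : ∃ F : MvPolynomial (Fin n × Fin n) K, F ≠ 0 ∧
    ∀ g : GL (Fin n) K,
      MvPolynomial.eval (fun p => (g : Matrix (Fin n) (Fin n) K) p.1 p.2) F ≠ 0 →
      ∀ m ∈ genM I J,
        m ∈ LdE lx (VI (I * Ideal.map (coordChange K n g) J) (expDeg n m) : Set (PS K n)) := by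
  classical
  have hfin : {m | Minimal (· ∈ genM I J) m}.Finite :=
    WellQuasiOrderedLE.finite_of_isAntichain (setOfPred_minimal_antichain _)
  have hex : ∀ m, ∃ f, m ∈ genM I J → f ∈ genN I J (expDeg n m) ∧ coeff m f ≠ 0 ∧
      ∀ m' ∈ f.support, m' = m ∨ lx m' < lx m := by
    intro m
    by_cases hm : m ∈ genM I J
    · obtain ⟨f, h1, h2, h3⟩ := hm
      exact ⟨f, fun _ => ⟨h1, h2, h3⟩⟩
    · exact ⟨0, fun h => absurd h hm⟩
  choose f hf using hex
  refine ⟨∏ m ∈ hfin.toFinset, coeff m (f m), ?_, ?_⟩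
  · rw [Finset.prod_ne_zero_iff]
    intro m hm
    have : Minimal (· ∈ genM I J) m := by simpa using hm
    exact (hf m this.1).2.1
  · intro g hg m hm
    rw [map_prod, Finset.prod_ne_zero_iff] at hg
    obtain ⟨m0, hle, hm0⟩ := exists_minimal_le_of_wellFoundedLT (· ∈ genM I J) m hm
    obtain ⟨u, rfl⟩ := exists_add_of_le hle
    have hg0 := hg m0 (by simpa using hm0)
    obtain ⟨h1, h2, h3⟩ := hf m0 hm0.1
    refine LdE_add lx lx_add (VI (I * Ideal.map (coordChange K n g) J) (expDeg n m0)) _ u ?_ ?_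
    · intro f hf
      refine mem_VI.mpr ⟨Ideal.mul_mem_right _ _ (mem_VI.mp hf).1, ?_⟩
      rw [expDeg_add]
      exact (mem_VI.mp hf).2.mul (monomial_homog u 1)
    · refine ⟨spc g (f m0), mem_VI.mpr ⟨spc_genI I J g (mem_genN.mp h1).1,
        (mem_genN.mp h1).2.map _⟩, ?_, ?_⟩
      · rw [spc, coeff_map]; exact hg0
      · intro m' hm'
        exact h3 m' (support_map_subset _ _ hm')

end Gen

/-- **Theorem 1.4** (Caviglia–Murai): suppose `char K = 0`.  Let `I, J ⊆ S` be homogeneous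
ideals.  For a general change of coordinates `g ∈ GL_n(K)`,
`H(I·g(J), d) ≥ H(I^lex · J^oplex, d)` for all `d ≥ 0`. -/
theorem hilb_general_product_ge_lex [CharZero K]
    (I J : Ideal (PS K n)) (hI : IsHomog K n I) (hJ : IsHomog K n J)
    (Ilex : Ideal (PS K n)) (hIlex : IsLexIdeal K n Ilex)
    (hIlexHilb : ∀ d : ℕ, hilb K n Ilex d = hilb K n I d)
    (Jop : Ideal (PS K n)) (hJop : IsOplexIdeal K n Jop)
    (hJopHilb : ∀ d : ℕ, hilb K n Jop d = hilb K n J d)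
 :
    generally K n (fun g => ∀ d : ℕ,
      hilb K n (Ilex * Jop) d ≤ hilb K n (I * Ideal.map (coordChange K n g) J) d) := by
  classical
  obtain ⟨F, hF0, hF⟩ := genM_spec I J
  refine ⟨F, hF0, fun g hg d => ?_⟩
  obtain ⟨r, hr, hA⟩ := ach_main I J Ilex hIlex hIlexHilb Jop hJop hJopHilb d
  refine hr.trans ((ach_le_genM I J hA).trans ?_)
  have h := card_LdE_eq lx d (lx_injOn d) (VI (I * Ideal.map (coordChange K n g) J) d) inf_le_right
  change _ ≤ Module.finrank K (VI (I * Ideal.map (coordChange K n g) J) d)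
  rw [← h]
  apply Finset.card_le_card
  intro m hm
  obtain ⟨h1, h2⟩ := Finset.mem_filter.mp hm
  refine Finset.mem_filter.mpr ⟨h1, ?_⟩
  rw [mem_monF] at h1
  rw [← h1]
  exact hF g hg m h2

end
end

section
/- Let K be a field of characteristic 0 and S = K[x_1,...,x_n]. Let I ⊆ S be a 0-Borel (strongly stable) monomial ideal and P ⊆ S an opposite lex ideal. Then dim_K (I ∩ P)_d ≤ dim_K (I^lex ∩ P)_d for all d ≥ 0. -/
open MvPolynomial TensorProduct CategoryTheory

noncomputable section

variable (K : Type) [Field K] (n : ℕ)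

/-- A 0-Borel (strongly stable) monomial ideal: for every monomial `u·x_j ∈ I` and every
`i < j`, also `u·x_i ∈ I`. -/
def IsZeroBorel (I : Ideal (PS K n)) : Prop :=
  IsMonomialIdeal K n I ∧ ∀ m : Fin n →₀ ℕ, MvPolynomial.monomial m (1 : K) ∈ I →
    ∀ i j : Fin n, i < j → m j ≠ 0 →
      MvPolynomial.monomial (m + Finsupp.single i 1 - Finsupp.single j 1) (1 : K) ∈ I

/-- An opposite 0-Borel monomial ideal: for every monomial `u·x_j ∈ I` and every `j < i`,
also `u·x_i ∈ I`. -/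
def IsOpZeroBorel (I : Ideal (PS K n)) : Prop :=
  IsMonomialIdeal K n I ∧ ∀ m : Fin n →₀ ℕ, MvPolynomial.monomial m (1 : K) ∈ I →
    ∀ i j : Fin n, j < i → m j ≠ 0 →
      MvPolynomial.monomial (m + Finsupp.single i 1 - Finsupp.single j 1) (1 : K) ∈ I

namespace CM
open Finset

/-- lexicographic order, first coordinate decisive -/
def lx {n : ℕ} (a b : Fin n → ℕ) : Prop := ∃ i, (∀ j, j < i → a j = b j) ∧ a i < b i
/-- lexicographic order, last coordinate decisive -/
def ox {n : ℕ} (a b : Fin n → ℕ) : Prop := ∃ i, (∀ j, i < j → a j = b j) ∧ a i < b i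

/-- strongly stable set of monomials of degree `d` -/
def SS {n : ℕ} (d : ℕ) (B : Finset (Fin n → ℕ)) : Prop :=
  (∀ a ∈ B, ∑ i, a i = d) ∧
    ∀ (a : Fin n → ℕ) (i j : Fin n), i < j → a + Pi.single j 1 ∈ B → a + Pi.single i 1 ∈ B
/-- lex set of monomials of degree `d` -/
def LX {n : ℕ} (d : ℕ) (B : Finset (Fin n → ℕ)) : Prop :=
  (∀ a ∈ B, ∑ i, a i = d) ∧
    ∀ a ∈ B, ∀ b : Fin n → ℕ, ∑ i, b i = d → lx a b → b ∈ B
/-- revlex set of monomials in degree `d` -/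
def RV {n : ℕ} (d : ℕ) (R : (Fin n → ℕ) → Prop) : Prop :=
  ∀ a b : Fin n → ℕ, ∑ i, a i = d → ∑ i, b i = d → R a → ox b a → R b

lemma lx_tri {n : ℕ} (a b : Fin n → ℕ) : lx a b ∨ a = b ∨ lx b a := by
  by_cases h : a = b
  · exact Or.inr (Or.inl h)
  have hne : (univ.filter (fun i => a i ≠ b i)).Nonempty := by
    by_contra hc
    rw [Finset.not_nonempty_iff_eq_empty] at hc
    apply h
    funext i
    by_contra hi
    have : i ∈ (univ.filter (fun i => a i ≠ b i)) := by simp [hi]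
    simp [hc] at this
  set i := (univ.filter (fun i => a i ≠ b i)).min' hne with hi
  have hmem : i ∈ univ.filter (fun i => a i ≠ b i) := Finset.min'_mem _ _
  have hlt : ∀ j, j < i → a j = b j := by
    intro j hj
    by_contra hc
    have : i ≤ j := Finset.min'_le _ _ (by simp [hc])
    omega
  simp at hmem
  rcases lt_or_gt_of_ne hmem with h1 | h1
  · exact Or.inl ⟨i, hlt, h1⟩
  · exact Or.inr (Or.inr ⟨i, fun j hj => (hlt j hj).symm, h1⟩)

lemma lx_trans {n : ℕ} {a b c : Fin n → ℕ} (h1 : lx a b) (h2 : lx b c) : lx a c := by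
  obtain ⟨i, hi, hi'⟩ := h1
  obtain ⟨j, hj, hj'⟩ := h2
  rcases lt_trichotomy i j with h | h | h
  · exact ⟨i, fun k hk => (hi k hk).trans (hj k (hk.trans h)), by rw [← hj i h]; exact hi'⟩
  · subst h
    exact ⟨i, fun k hk => (hi k hk).trans (hj k hk), hi'.trans hj'⟩
  · exact ⟨j, fun k hk => (hi k (hk.trans h)).trans (hj k hk), by rw [hi j h]; exact hj'⟩

lemma lx_irrefl {n : ℕ} (a : Fin n → ℕ) : ¬ lx a a := by
  rintro ⟨i, _, h⟩
  exact lt_irrefl _ h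

lemma LX.nested {n d : ℕ} {A B : Finset (Fin n → ℕ)} (hA : LX d A) (hB : LX d B) :
    A ⊆ B ∨ B ⊆ A := by
  by_contra hc
  push Not at hc
  obtain ⟨h1, h2⟩ := hc
  rw [Finset.not_subset] at h1 h2
  obtain ⟨a, ha, ha'⟩ := h1
  obtain ⟨b, hb, hb'⟩ := h2
  rcases lx_tri a b with h | h | h
  · exact hb' (hA.2 a ha b (hB.1 b hb) h)
  · subst h; exact ha' hb
  · exact ha' (hB.2 b hb a (hA.1 a ha) h)

lemma LX.subset_of_card {n d : ℕ} {A B : Finset (Fin n → ℕ)} (hA : LX d A) (hB : LX d B)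
    (h : A.card ≤ B.card) : A ⊆ B := by
  rcases hA.nested hB with h1 | h1
  · exact h1
  · exact (Finset.eq_of_subset_of_card_le h1 h).symm.subset

lemma LX.ss {n d : ℕ} {A : Finset (Fin n → ℕ)} (hA : LX d A) : SS d A := by
  refine ⟨hA.1, fun a i j hij h => ?_⟩
  refine hA.2 _ h _ ?_ ⟨i, ?_, ?_⟩
  · have := hA.1 _ h
    simp only [Pi.add_apply, Finset.sum_add_distrib, Finset.sum_pi_single', Finset.mem_univ,
      if_true] at this ⊢
    simpa using this
  · intro k hk
    simp [Pi.single_apply, hk.ne, (hk.trans hij).ne]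
  · simp [Pi.single_apply, hij.ne]

/-- a nonempty finset has a lex-max element -/
lemma exists_max {n : ℕ} (X : Finset (Fin n → ℕ)) (hX : X.Nonempty) :
    ∃ m ∈ X, ∀ b ∈ X, ¬ lx m b := by
  classical
  induction hX using Finset.Nonempty.cons_induction with
  | singleton a => exact ⟨a, by simp, by simp [lx_irrefl]⟩
  | cons a s ha hs ih =>
    obtain ⟨m, hm, hm'⟩ := ih
    by_cases h : lx m a
    · refine ⟨a, by simp, ?_⟩
      intro b hb
      rcases Finset.mem_cons.1 hb with rfl | hb
      · exact lx_irrefl _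
      · exact fun h2 => hm' b hb (lx_trans h h2)
    · refine ⟨m, by simp [hm], ?_⟩
      intro b hb
      rcases Finset.mem_cons.1 hb with rfl | hb
      · exact h
      · exact hm' b hb

lemma exists_lex {n : ℕ} (d k : ℕ) (hk : k ≤ (Finset.piAntidiag (univ : Finset (Fin n)) d).card) :
    ∃ C : Finset (Fin n → ℕ), LX d C ∧ C.card = k := by
  classical
  induction k with
  | zero => exact ⟨∅, ⟨by simp, by simp⟩, rfl⟩
  | succ k ih =>
    obtain ⟨C, hC, hc⟩ := ih (by omega)
    have hne : ((Finset.piAntidiag (univ : Finset (Fin n)) d) \ C).Nonempty := by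
      rw [← Finset.card_pos]
      have := Finset.le_card_sdiff C (Finset.piAntidiag (univ : Finset (Fin n)) d)
      omega
    obtain ⟨m, hm, hm'⟩ := exists_max _ hne
    simp at hm
    refine ⟨insert m C, ⟨?_, ?_⟩, by rw [Finset.card_insert_of_notMem hm.2, hc]⟩
    · intro a ha
      rcases Finset.mem_insert.1 ha with rfl | ha
      · exact hm.1
      · exact hC.1 a ha
    · intro a ha b hb hab
      rcases Finset.mem_insert.1 ha with rfl | ha
      · by_contra hbc
        refine hm' b ?_ hab
        simp at hbc ⊢
        exact ⟨hb, hbc.2⟩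
      · exact Finset.mem_insert_of_mem (hC.2 a ha b hb hab)

open Classical in
/-- upper shadow -/
def sh {n : ℕ} (B : Finset (Fin n → ℕ)) : Finset (Fin n → ℕ) :=
  univ.biUnion fun i => B.image (fun a => a + Pi.single i 1)

lemma mem_sh {n : ℕ} {B : Finset (Fin n → ℕ)} {v : Fin n → ℕ} :
    v ∈ sh B ↔ ∃ i, ∃ a ∈ B, a + Pi.single i 1 = v := by
  simp [sh]

lemma sum_add_single {n : ℕ} (a : Fin n → ℕ) (i : Fin n) (c : ℕ) :
    ∑ k, (a + Pi.single i c : Fin n → ℕ) k = (∑ k, a k) + c := by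
  simp [Finset.sum_add_distrib]

lemma LX.sh {n d : ℕ} {A : Finset (Fin n → ℕ)} (hA : LX d A) : LX (d + 1) (sh A) := by
  refine ⟨?_, ?_⟩
  · intro v hv
    obtain ⟨i, a, ha, rfl⟩ := mem_sh.1 hv
    rw [sum_add_single, hA.1 a ha]
  · intro w hw v hv hlt
    obtain ⟨i, m, hm, rfl⟩ := mem_sh.1 hw
    obtain ⟨p, hp, hp'⟩ := hlt
    have hle : ∀ q, m q ≤ (m + Pi.single i 1 : Fin n → ℕ) q := by intro q; simp
    have hne : (univ.filter (fun j => v j ≠ 0)).Nonempty := ⟨p, by simp; omega⟩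
    set j := (univ.filter (fun j => v j ≠ 0)).max' hne with hj
    have hmem : j ∈ univ.filter (fun j => v j ≠ 0) := Finset.max'_mem _ _
    have hgt : ∀ q, j < q → v q = 0 := by
      intro q hq
      by_contra hc
      have : q ≤ j := Finset.le_max' _ _ (by simp [hc])
      omega
    have hpj : p ≤ j := Finset.le_max' _ _ (by simp; omega)
    simp only [mem_filter, mem_univ, true_and] at hmem
    set u : Fin n → ℕ := fun q => if q = j then v q - 1 else v q with hu
    have huv : u + Pi.single j 1 = v := by
      funext q
      by_cases hq : q = j
      · subst hq; simp [hu]; omega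
      · simp [hu, hq]
    have hus : ∑ q, u q = d := by
      have := sum_add_single u j 1
      rw [huv, hv] at this
      omega
    rw [← huv]
    refine mem_sh.2 ⟨j, u, ?_, rfl⟩
    rcases lx_tri m u with h | h | h
    · exact hA.2 m hm u hus h
    · rw [← h]; exact hm
    exfalso
    have hms := hA.1 m hm
    obtain ⟨r, hr, hr'⟩ := h
    have hlow : ∀ q, q < p → m q ≤ u q := by
      intro q hq
      have h1 := hp q hq
      have h2 := hle q
      have : q ≠ j := by omega
      simp only [hu, this, if_false]
      omega
    have hpp := hle p
    have hup : m p ≤ u p := by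
      simp only [hu]
      split_ifs <;> omega
    rcases lt_trichotomy r p with h | h | h
    · have := hlow r h; omega
    · subst h; omega
    · rcases hpj.lt_or_eq with h3 | h3
      · have h4 := hr p h
        have : p ≠ j := h3.ne
        simp only [hu, this, if_false] at h4
        omega
      · have : ∑ q, u q < ∑ q, m q := by
          refine Finset.sum_lt_sum ?_ ⟨r, by simp, hr'⟩
          intro q _
          by_cases hq : q < r
          · exact (hr q hq).le
          · have : j < q := by omega
            have h5 := hgt q this
            simp [hu, this.ne', h5]
        omega

/-! slices -/
open Classical in
/-- the slice of monomials with last exponent `k` -/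
def sl {n : ℕ} (k : ℕ) (B : Finset (Fin (n + 1) → ℕ)) : Finset (Fin n → ℕ) :=
  (B.filter (fun a => a (Fin.last n) = k)).image Fin.init

/-- append a last exponent -/
def sn {n : ℕ} (a : Fin n → ℕ) (k : ℕ) : Fin (n + 1) → ℕ := Fin.snoc (α := fun _ => ℕ) a k

@[simp] lemma sn_castSucc {n : ℕ} (a : Fin n → ℕ) (k : ℕ) (i : Fin n) : sn a k i.castSucc = a i := by
  simp [sn]
@[simp] lemma sn_last {n : ℕ} (a : Fin n → ℕ) (k : ℕ) : sn a k (Fin.last n) = k := by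
  simp [sn]
lemma sn_init {n : ℕ} (a : Fin (n+1) → ℕ) : sn (Fin.init a) (a (Fin.last n)) = a := by
  simp [sn]
lemma init_sn {n : ℕ} (a : Fin n → ℕ) (k : ℕ) : Fin.init (sn a k) = a := by
  simp [sn]
lemma sum_sn {n : ℕ} (a : Fin n → ℕ) (k : ℕ) : ∑ i, sn a k i = (∑ i, a i) + k := by
  simp [Fin.sum_univ_castSucc]

lemma mem_sl {n k : ℕ} {B : Finset (Fin (n + 1) → ℕ)} {a : Fin n → ℕ} :
    a ∈ sl k B ↔ sn a k ∈ B := by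
  simp only [sl, mem_image, mem_filter]
  constructor
  · rintro ⟨b, ⟨hb, rfl⟩, rfl⟩
    rwa [sn_init]
  · intro h
    exact ⟨_, ⟨h, by simp⟩, init_sn a k⟩

lemma sn_add {n : ℕ} (a : Fin n → ℕ) (k : ℕ) (i : Fin n) (c : ℕ) :
    sn (a + Pi.single i c) k = sn a k + Pi.single i.castSucc c := by
  funext q
  refine Fin.lastCases ?_ (fun q => ?_) q
  · have : Fin.last n ≠ i.castSucc := (Fin.castSucc_lt_last i).ne'
    simp [Pi.single_apply, this]
  · simp [Pi.single_apply]

lemma sn_add_last {n : ℕ} (a : Fin n → ℕ) (k c : ℕ) :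
    sn a (k + c) = sn a k + Pi.single (Fin.last n) c := by
  funext q
  refine Fin.lastCases ?_ (fun q => ?_) q
  · simp
  · have : q.castSucc ≠ Fin.last n := (Fin.castSucc_lt_last q).ne
    simp [Pi.single_apply, this]

lemma lx_sn {n k : ℕ} {a b : Fin n → ℕ} (h : lx a b) (k l : ℕ) : lx (sn a k) (sn b l) := by
  obtain ⟨i, hi, hi'⟩ := h
  refine ⟨i.castSucc, ?_, by simpa using hi'⟩
  intro j hj
  revert hj
  refine Fin.lastCases ?_ (fun q => ?_) j
  · intro h
    exact absurd h (not_lt.2 (Fin.le_last _))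
  · intro h
    simpa using hi q (by simpa using h)

lemma ox_sn {n k : ℕ} {a b : Fin n → ℕ} (h : ox a b) : ox (sn a k) (sn b k) := by
  obtain ⟨i, hi, hi'⟩ := h
  refine ⟨i.castSucc, ?_, by simpa using hi'⟩
  intro j
  refine Fin.lastCases ?_ (fun q => ?_) j
  · intro h
    simp
  · intro h
    simpa using hi q (by simpa using h)

lemma ox_sn_lt {n k l : ℕ} (a b : Fin n → ℕ) (h : k < l) : ox (sn a k) (sn b l) :=
  ⟨Fin.last n, fun j hj => absurd hj (not_lt.2 (Fin.le_last _)), by simpa using h⟩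

lemma SS.sl {n d : ℕ} {B : Finset (Fin (n + 1) → ℕ)} (h : SS d B) (k : ℕ) : SS (d - k) (sl k B) := by
  refine ⟨fun a ha => ?_, fun a i j hij ha => ?_⟩
  · have := h.1 _ (mem_sl.1 ha)
    rw [sum_sn] at this
    omega
  · rw [mem_sl, sn_add] at ha ⊢
    exact h.2 _ _ _ (by simpa using hij) ha

lemma LX.sl {n d : ℕ} {B : Finset (Fin (n + 1) → ℕ)} (h : LX d B) (k : ℕ) : LX (d - k) (sl k B) := by
  refine ⟨(h.ss.sl k).1, fun a ha b hb hab => ?_⟩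
  rw [mem_sl] at ha ⊢
  have := h.1 _ ha
  rw [sum_sn] at this
  refine h.2 _ ha _ ?_ (lx_sn (k := 0) hab k k)
  rw [sum_sn]
  omega

lemma card_sl {n d : ℕ} {B : Finset (Fin (n + 1) → ℕ)} (h : ∀ a ∈ B, ∑ i, a i = d) :
    B.card = ∑ k ∈ range (d + 1), (sl k B).card := by
  classical
  rw [Finset.card_eq_sum_card_fiberwise (f := fun a => a (Fin.last n)) (t := range (d + 1))]
  · refine Finset.sum_congr rfl fun k _ => ?_
    rw [CM.sl, Finset.card_image_of_injOn]
    · intro a ha b hb hab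
      simp at ha hb
      rw [← sn_init a, ← sn_init b, hab, ha.2, hb.2]
  · intro a ha
    have := h a ha
    rw [Fin.sum_univ_castSucc] at this
    simp
    omega

open Classical in
lemma sl_filter {n : ℕ} (k : ℕ) (B : Finset (Fin (n + 1) → ℕ)) (R : (Fin (n+1) → ℕ) → Prop) :
    sl k (B.filter R) = (sl k B).filter (fun a => R (sn a k)) := by
  ext a
  simp [mem_sl]

open Classical in
/-- main combinatorial claim -/
def AA (n : ℕ) : Prop := ∀ (d : ℕ) (B L : Finset (Fin n → ℕ)) (R : (Fin n → ℕ) → Prop),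
  SS d B → LX d L → L.card ≤ B.card → RV d R → (L.filter R).card ≤ (B.filter R).card

def MM (n : ℕ) : Prop := ∀ (d : ℕ) (B L : Finset (Fin n → ℕ)),
  SS d B → LX d L → L.card ≤ B.card → (sh L).card ≤ (sh B).card

lemma AA_zero : AA 0 := by
  classical
  intro d B L R hB hL h hR
  refine Finset.card_le_card (Finset.filter_subset_filter _ ?_)
  intro a ha
  have : 0 < B.card := lt_of_lt_of_le (Finset.card_pos.2 ⟨a, ha⟩) h
  obtain ⟨b, hb⟩ := Finset.card_pos.1 this
  rwa [Subsingleton.elim a b]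

lemma MM_zero : MM 0 := by
  intro d B L hB hL h
  simp [sh]

lemma MM_succ {n : ℕ} (hA : AA (n + 1)) (hM : MM n) : MM (n + 1) := by
  classical
  intro d B L hB hL h
  have key : ∀ C : Finset (Fin (n+1) → ℕ),
      (C.image (fun a => a + Pi.single (Fin.last n) 1) ∪ (sh (sl 0 C)).image (fun a => sn a 0)).card
        = C.card + (sh (sl 0 C)).card := by
    intro C
    rw [Finset.card_union_of_disjoint, Finset.card_image_of_injective, Finset.card_image_of_injective]
    · intro a b hab
      have := congrArg Fin.init hab
      simpa [init_sn] using this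
    · intro a b hab
      simpa using hab
    · rw [Finset.disjoint_left]
      intro x hx hx'
      simp only [mem_image] at hx hx'
      obtain ⟨a, _, rfl⟩ := hx
      obtain ⟨b, _, hb⟩ := hx'
      have := congrFun hb (Fin.last n)
      simp at this
  have h0 : (sl 0 L).card ≤ (sl 0 B).card := by
    have := hA d B L (fun a => a (Fin.last n) = 0) hB hL h ?_
    · have e : ∀ C : Finset (Fin (n+1) → ℕ), (sl 0 C).card = (C.filter (fun a => a (Fin.last n) = 0)).card := by
        intro C
        rw [CM.sl, Finset.card_image_of_injOn]
        · intro a ha b hb hab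
          simp at ha hb
          rw [← sn_init a, ← sn_init b, hab, ha.2, hb.2]
      rw [e, e]
      convert this
    · intro a b _ _ ha hba
      obtain ⟨i, hi, hi'⟩ := hba
      rcases (Fin.le_last i).lt_or_eq with h | h
      · rw [hi _ h]; exact ha
      · subst h; omega
  have h1 := hM _ _ _ (hB.sl 0) (hL.sl 0) h0
  calc (sh L).card ≤ _ := Finset.card_le_card (t := L.image (fun a => a + Pi.single (Fin.last n) 1) ∪ (sh (sl 0 L)).image (fun a => sn a 0)) ?_
    _ = L.card + (sh (sl 0 L)).card := key L
    _ ≤ B.card + (sh (sl 0 B)).card := by omega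
    _ = _ := (key B).symm
    _ ≤ _ := Finset.card_le_card ?_
  · intro v hv
    obtain ⟨i, a, ha, rfl⟩ := mem_sh.1 hv
    rw [Finset.mem_union, Finset.mem_image, Finset.mem_image]
    revert ha
    refine Fin.lastCases ?_ (fun i => ?_) i
    · intro ha
      exact Or.inl ⟨a, ha, rfl⟩
    · intro ha
      rw [← sn_init a] at ha ⊢
      rcases Nat.eq_zero_or_pos (a (Fin.last n)) with h | h
      · right
        rw [h] at ha ⊢
        refine ⟨_, mem_sh.2 ⟨i, Fin.init a, mem_sl.2 ha, rfl⟩, ?_⟩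
        rw [sn_add]
      · left
        obtain ⟨c, hc⟩ := Nat.exists_eq_succ_of_ne_zero h.ne'
        rw [hc, Nat.succ_eq_add_one, sn_add_last] at ha
        refine ⟨_, hL.ss.2 _ i.castSucc _ (Fin.castSucc_lt_last i) ha, ?_⟩
        rw [hc, Nat.succ_eq_add_one, sn_add_last]
        exact add_right_comm _ _ _
  · intro v hv
    rw [Finset.mem_union, Finset.mem_image, Finset.mem_image] at hv
    rcases hv with ⟨a, ha, rfl⟩ | ⟨w, hw, rfl⟩
    · exact mem_sh.2 ⟨_, a, ha, rfl⟩
    · obtain ⟨i, a, ha, rfl⟩ := mem_sh.1 hw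
      exact mem_sh.2 ⟨i.castSucc, _, mem_sl.1 ha, (sn_add _ _ _ _).symm⟩

lemma AA_succ {n : ℕ} (hA : AA n) (hM : MM n) : AA (n + 1) := by
  classical
  intro d B L R hB hL hcard hR
  have hex : ∀ k, ∃ C : Finset (Fin n → ℕ), LX (d - k) C ∧ C.card = (sl k B).card := by
    intro k
    apply exists_lex
    apply Finset.card_le_card
    intro a ha
    simpa using (hB.sl k).1 a ha
  choose C hC hCc using hex
  have hRk : ∀ k ≤ d, RV (d - k) (fun a => R (sn a k)) := by
    intro k hk a b ha hb hRa hba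
    refine hR _ _ ?_ ?_ hRa (ox_sn hba) <;> rw [sum_sn] <;> omega
  have h1 : ∀ k ≤ d, ((C k).filter (fun a => R (sn a k))).card ≤
      ((sl k B).filter (fun a => R (sn a k))).card := fun k hk =>
    hA _ _ _ _ (hB.sl k) (hC k) (hCc k).le (hRk k hk)
  have h3 : ∀ k, k + 1 ≤ d → sh (C (k + 1)) ⊆ C k := by
    intro k hk
    have e : d - (k + 1) + 1 = d - k := by omega
    have hl := (hC (k + 1)).sh
    rw [e] at hl
    refine hl.subset_of_card (hC k) ?_
    rw [hCc k]
    refine (hM _ _ _ (hB.sl (k+1)) (hC (k+1)) (hCc _).le).trans (Finset.card_le_card ?_)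
    intro v hv
    obtain ⟨i, a, ha, rfl⟩ := mem_sh.1 hv
    rw [mem_sl, sn_add_last] at ha
    rw [mem_sl, sn_add]
    exact hB.2 _ _ _ (Fin.castSucc_lt_last i) ha
  have h3' : ∀ (t j : ℕ) (i : Fin n) (m : Fin n → ℕ), j + t ≤ d → m ∈ C (j + t) →
      m + Pi.single i t ∈ C j := by
    intro t
    induction t with
    | zero => intro j i m _ hm; simpa using hm
    | succ t ih =>
      intro j i m hj hm
      have := ih j i (m + Pi.single i 1) (by omega) (h3 _ (by omega) (mem_sh.2 ⟨i, m, hm, rfl⟩))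
      rw [add_assoc, ← Pi.single_add, add_comm 1 t] at this
      exact this
  have h4 : ∀ j k, j ≤ k → k ≤ d → ¬ (C k ⊆ sl k L) → sl j L ⊆ C j := by
    intro j k hjk hkd hk
    rcases hjk.lt_or_eq with hlt | rfl
    swap
    · exact ((hC j).nested (hL.sl j)).resolve_left hk
    rw [Finset.not_subset] at hk
    obtain ⟨m, hm, hm'⟩ := hk
    intro v hv
    by_contra hvC
    have hvs := (hL.sl j).1 v hv
    have hms := (hC k).1 m hm
    obtain _ | N := n
    · simp at hvs; omega
    have hmem := h3' (k - j) j (Fin.last N) m (by omega) (by rwa [show j + (k - j) = k by omega])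
    have hlx : lx v (m + Pi.single (Fin.last N) (k - j)) := by
      rcases lx_tri v (m + Pi.single (Fin.last N) (k - j)) with h | h | h
      · exact h
      · exact absurd (h ▸ hmem) hvC
      · exact absurd ((hC j).2 _ hmem _ hvs h) hvC
    refine hm' (mem_sl.2 (hL.2 _ (mem_sl.1 hv) _ (by rw [sum_sn]; omega) (lx_sn (k := 0) ?_ _ _)))
    obtain ⟨p, hp, hp'⟩ := hlx
    rcases (Fin.le_last p).lt_or_eq with h | h
    · refine ⟨p, fun q hq => ?_, ?_⟩
      · have := hp q hq
        simpa [Pi.single_apply, (hq.trans h).ne] using this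
      · simpa [Pi.single_apply, h.ne] using hp'
    · exfalso
      have : ∑ q, v q < ∑ q, (m + Pi.single (Fin.last N) (k - j) : Fin (N+1) → ℕ) q := by
        refine Finset.sum_lt_sum ?_ ⟨p, by simp, hp'⟩
        intro q _
        rcases (Fin.le_last q).lt_or_eq with h2 | h2
        · exact (hp q (by omega)).le
        · obtain rfl : q = p := h2.trans h.symm
          exact hp'.le
      rw [sum_add_single] at this
      omega
  have eL := card_sl (B := L.filter R) (d := d) (fun a ha => hL.1 a (Finset.mem_of_mem_filter a ha))
  have eB := card_sl (B := B.filter R) (d := d) (fun a ha => hB.1 a (Finset.mem_of_mem_filter a ha))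
  rw [eL, eB]
  simp only [sl_filter]
  refine le_trans ?_ (Finset.sum_le_sum (fun k hk => h1 k (by simp at hk; omega)))
  by_cases hcase : ∀ k ≤ d, (∃ r : Fin n → ℕ, ∑ i, r i = d - k ∧ R (sn r k)) → sl k L ⊆ C k
  · refine Finset.sum_le_sum fun k hk => Finset.card_le_card ?_
    intro a ha
    simp only [mem_filter] at ha ⊢
    exact ⟨hcase k (by simp at hk; omega) ⟨a, (hL.sl k).1 a ha.1, ha.2⟩ ha.1, ha.2⟩
  · push Not at hcase
    obtain ⟨a, had, ⟨r, hr, hrR⟩, hna⟩ := hcase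
    have hsub : ∀ k, a ≤ k → k ≤ d → C k ⊆ sl k L := by
      intro k hk hkd
      by_contra hc
      exact hna (h4 a k hk hkd hc)
    have hneg : ∑ k ∈ range (d + 1), ((C k).filter (fun a => ¬ R (sn a k))).card ≤
        ∑ k ∈ range (d + 1), ((sl k L).filter (fun a => ¬ R (sn a k))).card := by
      refine Finset.sum_le_sum fun k hk => Finset.card_le_card ?_
      have hkd : k ≤ d := by simp at hk; omega
      intro b hb
      simp only [mem_filter] at hb ⊢
      refine ⟨?_, hb.2⟩
      by_cases hka : a ≤ k
      · exact hsub k hka hkd hb.1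
      · exfalso
        have hbs := (hC k).1 b hb.1
        refine hb.2 (hR (sn r a) (sn b k) ?_ ?_ hrR (ox_sn_lt _ _ (by omega)))
        · rw [sum_sn]; omega
        · rw [sum_sn]; omega
    have tL : L.card = ∑ k ∈ range (d + 1), ((sl k L).filter (fun a => R (sn a k))).card +
        ∑ k ∈ range (d + 1), ((sl k L).filter (fun a => ¬ R (sn a k))).card := by
      rw [card_sl hL.1, ← Finset.sum_add_distrib]
      exact Finset.sum_congr rfl fun k _ => (Finset.card_filter_add_card_filter_not _).symm
    have tB : B.card = ∑ k ∈ range (d + 1), ((C k).filter (fun a => R (sn a k))).card +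
        ∑ k ∈ range (d + 1), ((C k).filter (fun a => ¬ R (sn a k))).card := by
      rw [card_sl hB.1, ← Finset.sum_add_distrib]
      exact Finset.sum_congr rfl fun k _ => by
        rw [Finset.card_filter_add_card_filter_not, hCc]
    omega

lemma AA_MM (n : ℕ) : AA n ∧ MM n := by
  induction n with
  | zero => exact ⟨AA_zero, MM_zero⟩
  | succ n ih =>
    have h := AA_succ ih.1 ih.2
    exact ⟨h, MM_succ h ih.2⟩

end CM

namespace CM
open Finset

/-- the monomials of degree `d` of an ideal -/
def mon (I : Ideal (PS K n)) (d : ℕ) : Finset (Fin n → ℕ) :=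
  open Classical in
  (Finset.piAntidiag (univ : Finset (Fin n)) d).filter
    (fun a => MvPolynomial.monomial (Finsupp.equivFunOnFinite.symm a) (1 : K) ∈ I)

lemma mem_mon {I : Ideal (PS K n)} {d : ℕ} {a : Fin n → ℕ} :
    a ∈ mon K n I d ↔ ∑ i, a i = d ∧
      MvPolynomial.monomial (Finsupp.equivFunOnFinite.symm a) (1 : K) ∈ I := by
  simp [mon]

lemma hilb_eq (I : Ideal (PS K n)) (hI : IsMonomialIdeal K n I) (d : ℕ) :
    hilb K n I d = (mon K n I d).card := by
  classical
  let f : mon K n I d → PS K n := fun a =>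
    MvPolynomial.monomial (Finsupp.equivFunOnFinite.symm a.1) (1 : K)
  have hli : LinearIndependent K f := by
    have h := (MvPolynomial.basisMonomials (Fin n) K).linearIndependent
    have h2 := h.comp (fun a : mon K n I d => (Finsupp.equivFunOnFinite.symm a.1 : Fin n →₀ ℕ)) ?_
    · have hf : f = (MvPolynomial.basisMonomials (Fin n) K) ∘
          (fun a : mon K n I d => (Finsupp.equivFunOnFinite.symm a.1 : Fin n →₀ ℕ)) := by
        funext a
        simp [f]
      rw [hf]
      exact h2
    · intro a b hab
      exact Subtype.ext (Finsupp.equivFunOnFinite.symm.injective hab)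
  have hspan : Submodule.restrictScalars K I ⊓ homogeneousSubmodule (Fin n) K d =
      Submodule.span K (Set.range f) := by
    apply le_antisymm
    · rintro p ⟨hp, hpd⟩
      have hp' : p ∈ I := hp
      rw [MvPolynomial.as_sum p]
      refine Submodule.sum_mem _ fun m hm => ?_
      have hdeg : ∑ i, m i = d := by
        have := hpd (MvPolynomial.mem_support_iff.1 hm)
        rw [← this]
        simp [Finsupp.weight_apply, Finsupp.sum_fintype]
      have : MvPolynomial.monomial m (p.coeff m) = (p.coeff m) • MvPolynomial.monomial m (1 : K) := by
        simp [MvPolynomial.smul_monomial]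
      rw [this]
      refine Submodule.smul_mem _ _ (Submodule.subset_span ⟨⟨m, ?_⟩, ?_⟩)
      · rw [mem_mon]
        refine ⟨hdeg, ?_⟩
        have := hI p hp' m hm
        convert this
        ext i
        rfl
      · simp only [f]
        have hm' : Finsupp.equivFunOnFinite.symm (⇑m) = m := by
          ext i
          rfl
        rw [hm']
    · rw [Submodule.span_le]
      rintro _ ⟨⟨a, ha⟩, rfl⟩
      rw [mem_mon] at ha
      refine ⟨ha.2, ?_⟩
      show _ ∈ homogeneousSubmodule (Fin n) K d
      rw [mem_homogeneousSubmodule]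
      apply MvPolynomial.isHomogeneous_monomial
      rw [Finsupp.degree_eq_sum]
      simpa using ha.1
  unfold hilb
  rw [hspan, finrank_span_eq_card hli]
  simp

lemma mon_inf (I P : Ideal (PS K n)) (d : ℕ) :
    mon K n (I ⊓ P) d = (mon K n I d).filter (fun a => a ∈ mon K n P d) := by
  ext a
  simp only [mem_mon, Submodule.mem_inf, mem_filter]
  tauto

lemma monomial_inf {I P : Ideal (PS K n)} (hI : IsMonomialIdeal K n I)
    (hP : IsMonomialIdeal K n P) : IsMonomialIdeal K n (I ⊓ P) :=
  fun f hf m hm => ⟨hI f hf.1 m hm, hP f hf.2 m hm⟩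

lemma ss_mon {I : Ideal (PS K n)} (hI : IsZeroBorel K n I) (d : ℕ) : SS d (mon K n I d) := by
  refine ⟨fun a ha => ((mem_mon K n).1 ha).1, fun a i j hij ha => ?_⟩
  rw [mem_mon, sum_add_single] at ha ⊢
  refine ⟨ha.1, ?_⟩
  have := hI.2 _ ha.2 i j hij (by simp)
  convert this using 3
  ext q
  simp only [Finsupp.coe_tsub, Finsupp.coe_add, Finsupp.equivFunOnFinite_symm_apply_apply,
    Pi.sub_apply, Pi.add_apply, Finsupp.single_apply, Pi.single_apply]
  have : i ≠ j := hij.ne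
  split_ifs <;> omega

lemma lx_mon {I : Ideal (PS K n)} (hI : IsLexIdeal K n I) (d : ℕ) : LX d (mon K n I d) := by
  refine ⟨fun a ha => ((mem_mon K n).1 ha).1, fun a ha b hb hab => ?_⟩
  rw [mem_mon] at ha ⊢
  refine ⟨hb, hI.2 _ _ ?_ ha.2 ?_⟩
  · simp [expDeg, ha.1, hb]
  · exact hab

end CM

/-- **Lemma 3.2** (Caviglia–Murai): let `char K = 0`, `I ⊆ S` a 0-Borel (strongly stable)
ideal and `P ⊆ S` an opposite lex ideal.  Then `dim_K (I ∩ P)_d ≤ dim_K (I^lex ∩ P)_d`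
for all `d ≥ 0`. -/
theorem dim_borel_inter_oplex_le [CharZero K]
    (I P : Ideal (PS K n)) (hI : IsZeroBorel K n I) (hP : IsOplexIdeal K n P)
    (Ilex : Ideal (PS K n)) (hIlex : IsLexIdeal K n Ilex)
    (hIlexHilb : ∀ d : ℕ, hilb K n Ilex d = hilb K n I d) :
    ∀ d : ℕ, hilb K n (I ⊓ P) d ≤ hilb K n (Ilex ⊓ P) d := by
  classical
  intro d
  rw [CM.hilb_eq K n _ (CM.monomial_inf K n hI.1 hP.1), CM.hilb_eq K n _ (CM.monomial_inf K n hIlex.1 hP.1),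
    CM.mon_inf, CM.mon_inf]
  have hc := hIlexHilb d
  rw [CM.hilb_eq K n _ hI.1, CM.hilb_eq K n _ hIlex.1] at hc
  have hmain := (CM.AA_MM n).1 d _ _ (fun a => ¬ a ∈ CM.mon K n P d) (CM.ss_mon K n hI d)
    (CM.lx_mon K n hIlex d) hc.le (by
      intro a b ha hb hRa hba hbP
      apply hRa
      rw [CM.mem_mon] at hbP ⊢
      refine ⟨ha, hP.2 _ _ ?_ hbP.2 hba⟩
      simp [expDeg, ha, hb])
  have e1 := Finset.card_filter_add_card_filter_not (s := CM.mon K n I d)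
    (fun a => a ∈ CM.mon K n P d)
  have e2 := Finset.card_filter_add_card_filter_not (s := CM.mon K n Ilex d)
    (fun a => a ∈ CM.mon K n P d)
  have hmain' : (Finset.filter (fun a => ¬ a ∈ CM.mon K n P d) (CM.mon K n Ilex d)).card ≤
      (Finset.filter (fun a => ¬ a ∈ CM.mon K n P d) (CM.mon K n I d)).card := by
    convert hmain
  convert (show _ ≤ _ from (by omega : (Finset.filter (fun a => a ∈ CM.mon K n P d) (CM.mon K n I d)).card ≤
    (Finset.filter (fun a => a ∈ CM.mon K n P d) (CM.mon K n Ilex d)).card)) using 1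

end
end

section
/- Let K be a field of characteristic 0 and S = K[x_1,...,x_n]. Let I ⊆ S be a 0-Borel (strongly stable) monomial ideal and P ⊆ S an opposite 0-Borel monomial ideal with minimal monomial generating set G(P) = {u_1,...,u_s}. Then, as a K-vector space, the product ideal IP decomposes as the direct sum IP = ⊕_{i=1}^s (I_{(≤ min u_i)})·u_i. -/
open MvPolynomial TensorProduct CategoryTheory

noncomputable section

variable (K : Type) [Field K] (n : ℕ)

/-- `max u`: the largest index of a variable dividing the monomial `X^u`
(with `max 1 = 1`, i.e. index `0`). -/
def maxVar (m : Fin n →₀ ℕ) : ℕ := m.support.sup (fun i => (i : ℕ))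

/-- `min u`: the smallest index of a variable dividing the monomial `X^u`
(with `min 1 = n`, i.e. index `n - 1`). -/
def minVar (m : Fin n →₀ ℕ) : ℕ := n - 1 - m.support.sup (fun i => n - 1 - (i : ℕ))

/-- The `K`-subspace `I_{(≤ k)} · X^u` of `S`: the span of the monomials `X^m · X^u` with
`X^m ∈ I` and `max X^m ≤ k`. -/
def truncMulSub (I : Ideal (PS K n)) (k : ℕ) (u : Fin n →₀ ℕ) : Submodule K (PS K n) :=
  Submodule.span K {f | ∃ m : Fin n →₀ ℕ, MvPolynomial.monomial m (1 : K) ∈ I ∧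
    maxVar n m ≤ k ∧ f = MvPolynomial.monomial (m + u) (1 : K)}

theorem maxVar_le_minVar_iff (a b : Fin n →₀ ℕ) :
    maxVar n a ≤ minVar n b ↔ ∀ q p : Fin n, a q ≠ 0 → b p ≠ 0 → q ≤ p := by
  unfold maxVar minVar
  constructor
  · intro h q p hq hp
    have h1 : (q : ℕ) ≤ a.support.sup (fun i => (i : ℕ)) :=
      Finset.le_sup (f := fun i : Fin n => (i : ℕ)) (Finsupp.mem_support_iff.mpr hq)
    have h2 : n - 1 - (p : ℕ) ≤ b.support.sup (fun i => n - 1 - (i : ℕ)) :=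
      Finset.le_sup (f := fun i : Fin n => n - 1 - (i : ℕ)) (Finsupp.mem_support_iff.mpr hp)
    have := p.2
    have := q.2
    rw [Fin.le_def]
    omega
  · intro h
    refine Finset.sup_le fun q hq => ?_
    have h2 : b.support.sup (fun i => n - 1 - (i : ℕ)) ≤ n - 1 - (q : ℕ) := by
      refine Finset.sup_le fun p hp => ?_
      have := h q p (Finsupp.mem_support_iff.mp hq) (Finsupp.mem_support_iff.mp hp)
      rw [Fin.le_def] at this
      omega
    have := q.2
    omega

theorem tails_comparable (m m' v v' : Fin n →₀ ℕ) (h : maxVar n m ≤ minVar n v)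
    (h' : maxVar n m' ≤ minVar n v') (e : m + v = m' + v') : v ≤ v' ∨ v' ≤ v := by
  rw [maxVar_le_minVar_iff] at h h'
  by_contra hc
  rw [not_or] at hc
  obtain ⟨h1, h2⟩ := hc
  simp only [Finsupp.le_def, not_forall, not_le] at h1 h2
  obtain ⟨p, hp⟩ := h1
  obtain ⟨q, hq⟩ := h2
  have ep : m p + v p = m' p + v' p := by simpa using DFunLike.congr_fun e p
  have eq : m q + v q = m' q + v' q := by simpa using DFunLike.congr_fun e q
  have hqp := h q p (by omega) (by omega)
  have hpq := h' p q (by omega) (by omega)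
  obtain rfl := le_antisymm hqp hpq
  omega

/-- The potential minimized in the exchange argument. -/
def potFun (b : Fin n →₀ ℕ) : ℕ := ∑ l : Fin n, (n - (l : ℕ)) * b l

theorem potFun_add (b c : Fin n →₀ ℕ) : potFun n (b + c) = potFun n b + potFun n c := by
  simp [potFun, mul_add, Finset.sum_add_distrib]

theorem potFun_single (p : Fin n) : potFun n (Finsupp.single p 1) = n - (p : ℕ) := by
  simp [potFun, Finsupp.single_apply]

theorem exists_eq_add_single (b : Fin n →₀ ℕ) (p : Fin n) (hp : b p ≠ 0) :
    ∃ c, b = c + Finsupp.single p 1 := by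
  refine ⟨b - Finsupp.single p 1, ?_⟩
  ext i
  by_cases hi : i = p
  · subst hi; simp; omega
  · simp [Finsupp.single_apply, Ne.symm hi]

theorem monomial_add_mem (I : Ideal (PS K n)) (a c : Fin n →₀ ℕ)
    (h : MvPolynomial.monomial a (1 : K) ∈ I) : MvPolynomial.monomial (a + c) (1 : K) ∈ I := by
  have : MvPolynomial.monomial (a + c) (1 : K)
      = MvPolynomial.monomial a 1 * MvPolynomial.monomial c 1 := by
    simp [MvPolynomial.monomial_mul]
  rw [this]
  exact I.mul_mem_right _ h

theorem exists_decomp (I P : Ideal (PS K n)) (hI : IsZeroBorel K n I) (hP : IsOpZeroBorel K n P)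
    (s : ℕ) (u : Fin s → (Fin n →₀ ℕ))
    (hgen : P = Ideal.span (Set.range (fun i => MvPolynomial.monomial (u i) (1 : K))))
    (N : ℕ) : ∀ (a b : Fin n →₀ ℕ), potFun n b = N → MvPolynomial.monomial a (1 : K) ∈ I →
    MvPolynomial.monomial b (1 : K) ∈ P →
    ∃ (i : Fin s) (m : Fin n →₀ ℕ), MvPolynomial.monomial m (1 : K) ∈ I ∧
      maxVar n m ≤ minVar n (u i) ∧ a + b = m + u i := by
  induction N using Nat.strong_induction_on with
  | _ N ih =>
  intro a b hN ha hb
  have hj : ∃ j, u j ≤ b := by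
    have hb' := hb
    rw [hgen, show (fun i => MvPolynomial.monomial (u i) (1 : K))
      = (fun t => MvPolynomial.monomial t (1 : K)) ∘ u from rfl, Set.range_comp,
      MvPolynomial.mem_ideal_span_monomial_image] at hb'
    obtain ⟨_, ⟨j, rfl⟩, h⟩ := hb' b (by simp [MvPolynomial.mem_support_iff])
    exact ⟨j, h⟩
  obtain ⟨j, hj⟩ := hj
  have hu : MvPolynomial.monomial (u j) (1 : K) ∈ P := by
    rw [hgen]; exact Ideal.subset_span ⟨j, rfl⟩
  obtain ⟨c, rfl⟩ := exists_add_of_le hj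
  by_cases hc : c = 0
  · subst hc
    rw [add_zero] at *
    by_cases hm : maxVar n a ≤ minVar n (u j)
    · exact ⟨j, a, ha, hm, rfl⟩
    rw [maxVar_le_minVar_iff] at hm
    push Not at hm
    obtain ⟨q, p, hq, hp, hpq⟩ := hm
    have ha' := hI.2 a ha p q hpq hq
    have hb' := hP.2 _ hu q p hpq hp
    obtain ⟨a', rfl⟩ := exists_eq_add_single n a q hq
    obtain ⟨b', hb0⟩ := exists_eq_add_single n (u j) p hp
    rw [hb0] at hb' hN ⊢
    rw [add_right_comm, add_tsub_cancel_right] at ha' hb'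
    rw [potFun_add, potFun_single] at hN
    have := q.2
    rw [Fin.lt_def] at hpq
    obtain ⟨i, m, h1, h2, h3⟩ := ih (potFun n (b' + Finsupp.single q 1))
      (by rw [potFun_add, potFun_single]; omega) _ _ rfl ha' hb'
    exact ⟨i, m, h1, h2, by rw [← h3]; abel⟩
  · have hpos : 0 < potFun n c := by
      obtain ⟨p, hp⟩ := Finsupp.ne_iff.mp hc
      obtain ⟨d, rfl⟩ := exists_eq_add_single n c p hp
      rw [potFun_add, potFun_single]
      have := p.2
      omega
    rw [potFun_add] at hN
    obtain ⟨i, m, h1, h2, h3⟩ := ih (potFun n (u j)) (by omega) (a + c) (u j) rfl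
      (monomial_add_mem K n I a c ha) hu
    exact ⟨i, m, h1, h2, by rw [← h3]; abel⟩

/-- The exponents of the monomials spanning `I_{(≤ k)} · X^u`. -/
def expSet (I : Ideal (PS K n)) (k : ℕ) (v : Fin n →₀ ℕ) : Set (Fin n →₀ ℕ) :=
  {w | ∃ m : Fin n →₀ ℕ, MvPolynomial.monomial m (1 : K) ∈ I ∧ maxVar n m ≤ k ∧ w = m + v}

theorem truncMulSub_eq (I : Ideal (PS K n)) (k : ℕ) (v : Fin n →₀ ℕ) :
    truncMulSub K n I k v
      = Submodule.span K (MvPolynomial.basisMonomials (Fin n) K '' expSet K n I k v) := by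
  unfold truncMulSub
  congr 1
  ext f
  simp only [Set.mem_ofPred_eq, Set.mem_image, expSet, MvPolynomial.coe_basisMonomials]
  constructor
  · rintro ⟨m, h1, h2, rfl⟩
    exact ⟨m + v, ⟨m, h1, h2, rfl⟩, rfl⟩
  · rintro ⟨_, ⟨m, h1, h2, rfl⟩, rfl⟩
    exact ⟨m, h1, h2, rfl⟩

/-- **Lemma 3.4** (Caviglia–Murai): let `char K = 0`, `I ⊆ S` a 0-Borel (strongly stable)
ideal and `P ⊆ S` an opposite 0-Borel ideal with minimal monomial generators
`G(P) = {u_1, …, u_s}`.  Then, as a `K`-vector space, `IP` is the direct sum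
`IP = ⊕_{i=1}^s (I_{(≤ min u_i)}) · u_i`. -/
theorem product_decomposition_of_borel [CharZero K]
    (I P : Ideal (PS K n)) (hI : IsZeroBorel K n I) (hP : IsOpZeroBorel K n P)
    (s : ℕ) (u : Fin s → (Fin n →₀ ℕ))
    (hgen : P = Ideal.span (Set.range (fun i => MvPolynomial.monomial (u i) (1 : K))))
    (hmin : ∀ i j : Fin s, i ≠ j → ¬ u i ≤ u j) :
    iSupIndep (fun i : Fin s => truncMulSub K n I (minVar n (u i)) (u i)) ∧
      (⨆ i : Fin s, truncMulSub K n I (minVar n (u i)) (u i)) =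
        Submodule.restrictScalars K (I * P) := by
  constructor
  · intro i
    have hle : (⨆ j, ⨆ (_ : j ≠ i), truncMulSub K n I (minVar n (u j)) (u j)) ≤
        Submodule.span K (MvPolynomial.basisMonomials (Fin n) K ''
          (⋃ j, ⋃ (_ : j ≠ i), expSet K n I (minVar n (u j)) (u j))) := by
      refine iSup₂_le fun j hj => ?_
      rw [truncMulSub_eq]
      exact Submodule.span_mono (Set.image_mono (Set.subset_biUnion_of_mem
        (u := fun j => expSet K n I (minVar n (u j)) (u j)) (s := {j | j ≠ i}) hj))
    refine Disjoint.mono_right hle ?_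
    simp only [truncMulSub_eq]
    refine (MvPolynomial.basisMonomials (Fin n) K).linearIndependent.disjoint_span_image ?_
    rw [Set.disjoint_left]
    rintro w ⟨m, -, h1, rfl⟩ hw
    simp only [Set.mem_iUnion] at hw
    obtain ⟨j, hj, m', -, h2, e⟩ := hw
    rcases tails_comparable n m m' (u i) (u j) h1 h2 e with h | h
    · exact hmin i j hj.symm h
    · exact hmin j i hj h
  · apply le_antisymm
    · refine iSup_le fun i => ?_
      unfold truncMulSub
      rw [Submodule.span_le]
      rintro f ⟨m, h1, -, rfl⟩
      have : MvPolynomial.monomial (m + u i) (1 : K)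
          = MvPolynomial.monomial m 1 * MvPolynomial.monomial (u i) 1 := by
        simp [MvPolynomial.monomial_mul]
      rw [this]
      refine Ideal.mul_mem_mul h1 ?_
      rw [hgen]
      exact Ideal.subset_span ⟨i, rfl⟩
    · intro f hf
      rw [Submodule.restrictScalars_mem] at hf
      refine Submodule.mul_induction_on hf ?_ (fun x y hx hy => Submodule.add_mem _ hx hy)
      intro g hg h hh
      rw [MvPolynomial.as_sum g, MvPolynomial.as_sum h, Finset.sum_mul_sum]
      refine Submodule.sum_mem _ fun a ha => Submodule.sum_mem _ fun b hb => ?_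
      obtain ⟨i, m, h1, h2, h3⟩ := exists_decomp K n I P hI hP s u hgen _ a b rfl
        (hI.1 g hg a ha) (hP.1 h hh b hb)
      rw [MvPolynomial.monomial_mul, h3, ← mul_one (_ * _), ← smul_eq_mul,
        ← MvPolynomial.smul_monomial]
      refine Submodule.smul_mem _ _ (Submodule.mem_iSup_of_mem i ?_)
      exact Submodule.subset_span ⟨m, h1, h2, rfl⟩

end
end
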